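/- There exists a constant C > 0 such that the following holds: if q is a squarefree positive integer with φ(q) > 8e² m log m, then for m sufficiently large, the number of m-tuples a ∈ ((ℤ/qℤ)^×)^m with π(x;q,a) → ∞ as x → ∞ is at least e^{-C m (log log m)/(log m)} · φ(q)^{m/log m}. -/

import Mathlib

open Filter

/-- `π(x; q, a)`: the number of indices `n` with `p_n ≤ x` such that the `m` consecutive
primes `p_n, p_{n+1}, …, p_{n+m-1}` satisfy `p_{n+i} ≡ a_i (mod q)` for all `i`. -/
noncomputable def consecCount (q m : ℕ) (a : Fin m → (ZMod q)ˣ) (x : ℝ) : ℕ :=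
  Set.ncard {n : ℕ | (Nat.nth Nat.Prime n : ℝ) ≤ x ∧
    ∀ i : Fin m, ((Nat.nth Nat.Prime (n + (i : ℕ)) : ℕ) : ZMod q) = (a i : ZMod q)}

/-!
Write `L = 2 ^ J`, `X = 2 ^ (300 m L)` and `Y = 1200 m² L`, so that `X / (300 m L)` is, up to lower
order terms, a lower bound for the number of primes below `X`. The spans `p_{n+m-1} - p_n` with
`p_n < X` sum to at most about `m X`, so by Markov's inequality at least `X / (1200 m L)` indices
`n` have span at most `Y`.

On the other hand a fixed pattern of residues modulo `q` is rare among these indices. Let `M` be `q`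
times the product of the primes up to `w = J / 4`. The pattern lifts to `(φ(M) / φ(q)) ^ m` patterns
modulo `M`. Once a lifted pattern is fixed, the gaps from `p_n` are determined by their quotients by
`M`, so there are at most `choose (Y / M + m - 1) (m - 1)` possible tuples of gaps; and for each of
them a Brun–Hooley sieve by the primes in `(w, 2 ^ L]` shows that `p_n` takes `O(X / M)` times
`(2 M / (φ(M) L)) ^ m` values, because `log (2 ^ L) ≥ L / 2`. The singular series does not depend on
the gaps up to a factor `2`, since all small primes divide `M`. Multiplying, the powers of `M`,
`φ(M)` and `L` cancel and a pattern occurs at most `X / (1200 m L) * (50000 m / φ(q)) ^ m` times.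

Comparing the two counts as `J → ∞`, at least `(φ(q) / (50000 m)) ^ m` patterns occur infinitely
often, and this exceeds `φ(q) ^ (m / log m)` as soon as `φ(q)` is a large enough multiple of `m`.
-/

section TruncatedProduct

open Finset

variable {ι : Type*}

/-- The expansion of `∏ p ∈ P, (1 + f p)` into a sum over the subsets of `P`, restricted to the
subsets with at most `b` elements. For `f = -1` on `P` this is Brun's truncation of
inclusion–exclusion. -/
def truncProd {R : Type*} [CommSemiring R] (P : Finset ι) (f : ι → R) (b : ℕ) : R :=
  ∑ D ∈ P.powerset with #D ≤ b, ∏ p ∈ D, f p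

lemma truncProd_congr {R : Type*} [CommSemiring R] {P : Finset ι} {f g : ι → R}
    (h : ∀ p ∈ P, f p = g p) : truncProd P f = truncProd P g :=
  funext fun _ ↦ sum_congr rfl fun _ hD ↦
    prod_congr rfl fun p hp ↦ h p (mem_powerset.1 (mem_filter.1 hD).1 hp)

lemma truncProd_empty {R : Type*} [CommSemiring R] (f : ι → R) (b : ℕ) :
    truncProd ∅ f b = 1 := by
  simp [truncProd, filter_singleton]

lemma truncProd_ite {R : Type*} [CommSemiring R] (P : Finset ι) (S : ι → Prop) [DecidablePred S]
    (f : ι → R) (b : ℕ) :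
    truncProd P (fun p ↦ if S p then f p else 0) b = truncProd (P.filter S) f b := by
  symm
  calc truncProd (P.filter S) f b
      = ∑ D ∈ (P.filter S).powerset with #D ≤ b, ∏ p ∈ D, if S p then f p else 0 := by
        refine sum_congr rfl fun D hD ↦ prod_congr rfl fun p hp ↦ ?_
        have hpS := mem_powerset.1 (mem_filter.1 hD).1 hp
        rw [if_pos (mem_filter.1 hpS).2]
    _ = truncProd P (fun p ↦ if S p then f p else 0) b := by
        refine sum_subset (filter_subset_filter _ (powerset_mono.2 (filter_subset _ _)))
          fun D hD hD' ↦ ?_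
        rw [mem_filter, mem_powerset] at hD hD'
        obtain ⟨p, hpD, hpS⟩ := not_subset.1 fun h : D ⊆ P.filter S ↦ hD' ⟨h, hD.2⟩
        exact prod_eq_zero hpD (if_neg fun h ↦ hpS (mem_filter.2 ⟨hD.1 hpD, h⟩))

lemma truncProd_const {R : Type*} [CommSemiring R] (P : Finset ι) (c : R) (b : ℕ) :
    truncProd P (fun _ ↦ c) b = ∑ i ∈ range (b + 1), ((#P).choose i : R) * c ^ i := by
  have maps : ∀ D ∈ P.powerset.filter (#· ≤ b), #D ∈ range (b + 1) :=
    fun D hD ↦ mem_range.2 (Nat.lt_succ_of_le (mem_filter.1 hD).2)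
  rw [truncProd, ← sum_fiberwise_of_maps_to maps]
  refine sum_congr rfl fun i hi ↦ ?_
  have fiber : {D ∈ {D ∈ P.powerset | #D ≤ b} | #D = i} = P.powersetCard i := by
    ext D
    have := mem_range.1 hi
    simp only [mem_filter, mem_powerset, mem_powersetCard]
    grind
  rw [fiber, sum_congr rfl fun D hD ↦ by rw [prod_const, (mem_powersetCard.1 hD).2], sum_const,
    card_powersetCard, nsmul_eq_mul]

lemma truncProd_const_le {c : ℝ} (hc : 0 ≤ c) (P : Finset ι) (b : ℕ) :
    truncProd P (fun _ ↦ c) b ≤ (c * #P + 1) ^ b := by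
  rw [truncProd_const, add_pow]
  refine sum_le_sum fun i hi ↦ ?_
  have choose_le : ((#P).choose i : ℝ) ≤ (#P : ℝ) ^ i := mod_cast Nat.choose_le_pow _ i
  have one_le_choose : (1 : ℝ) ≤ b.choose i :=
    mod_cast Nat.choose_pos (Nat.lt_succ_iff.1 (mem_range.1 hi))
  calc ((#P).choose i : ℝ) * c ^ i ≤ (#P : ℝ) ^ i * c ^ i := by gcongr
    _ = (c * #P) ^ i * 1 ^ (b - i) * 1 := by ring
    _ ≤ (c * #P) ^ i * 1 ^ (b - i) * b.choose i := by gcongr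

lemma truncProd_neg_one_nonneg (P : Finset ι) (b : ℕ) :
    0 ≤ truncProd P (fun _ ↦ (-1 : ℝ)) (2 * b) := by
  obtain rfl | hP := P.eq_empty_or_nonempty
  · simp only [truncProd_empty, zero_le_one]
  obtain ⟨k, hk⟩ := Nat.exists_eq_add_one.2 hP.card_pos
  have alternating : truncProd P (fun _ ↦ (-1 : ℝ)) (2 * b) = k.choose (2 * b) := by
    have := Int.alternating_sum_range_choose_eq_choose (n := k) (m := 2 * b)
    rw [truncProd_const, hk]
    simp only [mul_comm _ ((-1 : ℝ) ^ _)]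
    rw [(even_two_mul b).neg_one_pow, one_mul] at this
    exact_mod_cast this
  exact alternating ▸ Nat.cast_nonneg _

lemma exp_neg_two_mul_le_one_sub {x : ℝ} (hx : 0 ≤ x) (hx' : x ≤ 1 / 2) :
    Real.exp (-(2 * x)) ≤ 1 - x := by
  have hpos : 0 < 1 + 2 * x := by linarith
  rw [Real.exp_neg]
  calc (Real.exp (2 * x))⁻¹ ≤ (1 + 2 * x)⁻¹ :=
        inv_anti₀ hpos (by linarith [Real.add_one_le_exp (2 * x)])
    _ ≤ 1 - x := (inv_le_iff_one_le_mul₀ hpos).2 (by nlinarith)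

lemma exp_neg_two_mul_le_prod_one_sub {P : Finset ι} {g : ι → ℝ} {s : ℝ}
    (hg : ∀ p ∈ P, 0 ≤ g p) (hg' : ∀ p ∈ P, g p ≤ 1 / 2) (hs : ∑ p ∈ P, g p ≤ s) :
    Real.exp (-(2 * s)) ≤ ∏ p ∈ P, (1 - g p) :=
  calc Real.exp (-(2 * s)) ≤ Real.exp (∑ p ∈ P, -(2 * g p)) := by
        rw [Real.exp_le_exp, sum_neg_distrib, ← mul_sum]
        linarith
    _ = ∏ p ∈ P, Real.exp (-(2 * g p)) := Real.exp_sum _ _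
    _ ≤ ∏ p ∈ P, (1 - g p) := prod_le_prod (fun _ _ ↦ (Real.exp_pos _).le)
        fun p hp ↦ exp_neg_two_mul_le_one_sub (hg p hp) (hg' p hp)

-- Rankin's trick: a subset with more than `b` elements is weighted by `2 ^ (#D - b) ≥ 1`.
lemma abs_prod_one_sub_sub_truncProd_le {P : Finset ι} {g : ι → ℝ} {s : ℝ}
    (hg : ∀ p ∈ P, 0 ≤ g p) (hs : ∑ p ∈ P, g p ≤ s) (b : ℕ) :
    |∏ p ∈ P, (1 - g p) - truncProd P (fun p ↦ -g p) b| ≤ Real.exp (2 * s) / 2 ^ b := by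
  have prod_nonneg' : ∀ D ∈ P.powerset, 0 ≤ ∏ p ∈ D, g p := fun D hD ↦
    prod_nonneg fun p hp ↦ hg p (mem_powerset.1 hD hp)
  have tail : ∏ p ∈ P, (1 - g p) - truncProd P (fun p ↦ -g p) b =
      ∑ D ∈ P.powerset with ¬ #D ≤ b, ∏ p ∈ D, -g p := by
    simp only [sub_eq_add_neg (1 : ℝ)]
    rw [prod_one_add, truncProd, ← sum_filter_add_sum_filter_not _ (#· ≤ b), add_sub_cancel_left]
  calc |∏ p ∈ P, (1 - g p) - truncProd P (fun p ↦ -g p) b|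
      ≤ ∑ D ∈ P.powerset with ¬ #D ≤ b, |∏ p ∈ D, -g p| := tail ▸ abs_sum_le_sum_abs _ _
    _ ≤ ∑ D ∈ P.powerset with ¬ #D ≤ b, (∏ p ∈ D, 2 * g p) / 2 ^ b := by
        refine sum_le_sum fun D hD ↦ ?_
        obtain ⟨hDP, hDb⟩ := mem_filter.1 hD
        rw [prod_neg, abs_mul, abs_pow, abs_neg, abs_one, one_pow, one_mul,
          abs_of_nonneg (prod_nonneg' D hDP), prod_mul_distrib, prod_const, le_div_iff₀' (by simp)]
        gcongr
        · exact prod_nonneg' D hDP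
        · norm_num
        · omega
    _ ≤ ∑ D ∈ P.powerset, (∏ p ∈ D, 2 * g p) / 2 ^ b := by
        refine sum_le_sum_of_subset_of_nonneg (filter_subset _ _) fun D hD _ ↦ ?_
        rw [prod_mul_distrib]
        exact div_nonneg (mul_nonneg (by simp) (prod_nonneg' D hD)) (by simp)
    _ = (∏ p ∈ P, (1 + 2 * g p)) / 2 ^ b := by rw [← sum_div, prod_one_add]
    _ ≤ Real.exp (∑ p ∈ P, 2 * g p) / 2 ^ b := by
        rw [Real.exp_sum]
        gcongr with p
        · exact fun p hp ↦ by linarith [hg p hp]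
        · linarith [Real.add_one_le_exp (2 * g p)]
    _ ≤ Real.exp (2 * s) / 2 ^ b := by
        rw [← mul_sum]
        gcongr

lemma abs_truncProd_neg_le {P : Finset ι} {g : ι → ℝ} {s : ℝ} (hg : ∀ p ∈ P, 0 ≤ g p)
    (hg' : ∀ p ∈ P, g p ≤ 1 / 2) (hs : ∑ p ∈ P, g p ≤ s) (b : ℕ) :
    |truncProd P (fun p ↦ -g p) b| ≤
      (1 + Real.exp (4 * s) / 2 ^ b) * ∏ p ∈ P, (1 - g p) := by
  have lower := exp_neg_two_mul_le_prod_one_sub hg hg' hs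
  have tail := abs_prod_one_sub_sub_truncProd_le hg hs b
  have tail_le : Real.exp (2 * s) / 2 ^ b ≤
      Real.exp (4 * s) / 2 ^ b * ∏ p ∈ P, (1 - g p) :=
    calc Real.exp (2 * s) / 2 ^ b = Real.exp (4 * s) / 2 ^ b * Real.exp (-(2 * s)) := by
          rw [div_mul_eq_mul_div, ← Real.exp_add]
          ring_nf
      _ ≤ Real.exp (4 * s) / 2 ^ b * ∏ p ∈ P, (1 - g p) := by gcongr
  have := (Real.exp_pos _).trans_le lower
  rw [abs_le] at tail ⊢
  constructor <;> linarith [tail.1, tail.2]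

end TruncatedProduct

section Equidistribution

open Finset

/-- The weights `g` on `[0, X)` have total mass about `A`, spread evenly over the residue classes
of every modulus coprime to `P`, up to an error `E` in each single class. -/
def Equidistributed (X : ℕ) (P : Finset ℕ) (g : ℕ → ℝ) (A E : ℝ) : Prop :=
  ∀ M r : ℕ, 0 < M → (∀ p ∈ P, M.Coprime p) →
    |∑ n ∈ range X with n ≡ r [MOD M], g n - A / M| ≤ E

/-- Brun's truncated inclusion–exclusion weight of `n` for sifting out the residue classes `R p`
with `p ∈ P`. For even `b` it majorizes the indicator function of the unsifted integers. -/
noncomputable def siftWeight (R : ∀ p : ℕ, Finset (ZMod p)) (P : Finset ℕ) (b n : ℕ) : ℝ :=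
  truncProd P (fun p ↦ if (n : ZMod p) ∈ R p then -1 else 0) b

variable {X : ℕ} {P : Finset ℕ} {g : ℕ → ℝ} {A E : ℝ} {R : ∀ p : ℕ, Finset (ZMod p)}

lemma siftWeight_nonneg (P : Finset ℕ) (b n : ℕ) : 0 ≤ siftWeight R P (2 * b) n := by
  rw [siftWeight, truncProd_ite]
  exact truncProd_neg_one_nonneg _ b

lemma siftWeight_eq_one {n : ℕ} (hn : ∀ p ∈ P, (n : ZMod p) ∉ R p) (b : ℕ) :
    siftWeight R P b n = 1 := by
  rw [siftWeight, truncProd_ite, filter_eq_empty_iff.2 fun {p} hp ↦ hn p hp, truncProd_empty]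

lemma filter_modEq_and_natCast_eq {M p : ℕ} [NeZero p] (hMp : M.Coprime p) (r : ℕ) (a : ZMod p) :
    {n ∈ range X | n ≡ r [MOD M] ∧ (n : ZMod p) = a} =
      {n ∈ range X | n ≡ Nat.chineseRemainder hMp r a.val [MOD M * p]} := by
  have crt := (Nat.chineseRemainder hMp r a.val).2
  refine filter_congr fun n _ ↦ ?_
  rw [← Nat.modEq_and_modEq_iff_modEq_mul hMp, ← ZMod.natCast_eq_natCast_iff n _ p,
    (ZMod.natCast_eq_natCast_iff _ _ p).2 crt.2, ZMod.natCast_zmod_val]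
  exact and_congr_left' ⟨fun h ↦ h.trans crt.1.symm, fun h ↦ h.trans crt.1⟩

namespace Equidistributed

lemma one (X : ℕ) : Equidistributed X ∅ (fun _ ↦ 1) X 1 := by
  intro M r hM _
  have hM' : (0 : ℝ) < M := mod_cast hM
  have count : (∑ n ∈ range X with n ≡ r [MOD M], (1 : ℝ)) =
      (X / M : ℕ) + if r % M < X % M then 1 else 0 := by
    have := Nat.count_modEq_card X hM r
    rw [Nat.count_eq_card_filter_range] at this
    rw [sum_const, nsmul_eq_mul, mul_one, this]
    push_cast
    rfl
  have quotient : (X : ℝ) / M = (X / M : ℕ) + (X % M : ℕ) / M := by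
    rw [eq_comm, eq_div_iff hM'.ne', add_mul, div_mul_cancel₀ _ hM'.ne', mul_comm]
    exact_mod_cast Nat.div_add_mod X M
  have fract_le : ((X % M : ℕ) : ℝ) / M ≤ 1 :=
    (div_le_one hM').2 (mod_cast (Nat.mod_lt _ hM).le)
  have fract_nonneg : 0 ≤ ((X % M : ℕ) : ℝ) / M := by positivity
  rw [count, quotient, abs_le]
  split_ifs <;> constructor <;> linarith

lemma mono (h : Equidistributed X P g A E) {P' : Finset ℕ} (hP : P ⊆ P') :
    Equidistributed X P' g A E :=
  fun M r hM hMP ↦ h M r hM fun p hp ↦ hMP p (hP hp)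

lemma sum {ι : Type*} {s : Finset ι} {g : ι → ℕ → ℝ} {A E : ι → ℝ}
    (h : ∀ i ∈ s, Equidistributed X P (g i) (A i) (E i)) :
    Equidistributed X P (fun n ↦ ∑ i ∈ s, g i n) (∑ i ∈ s, A i) (∑ i ∈ s, E i) := by
  intro M r hM hMP
  rw [sum_comm, sum_div, ← sum_sub_distrib]
  exact (abs_sum_le_sum_abs _ _).trans (sum_le_sum fun i hi ↦ h i hi M r hM hMP)

lemma mul_neg_indicator (h : Equidistributed X P g A E) {p : ℕ} (hp : 0 < p)
    (hpP : ∀ p' ∈ P, p.Coprime p') (S : Finset (ZMod p)) :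
    Equidistributed X (insert p P) (fun n ↦ g n * if (n : ZMod p) ∈ S then -1 else 0)
      (A * -(#S / p)) (E * #S) := by
  intro M r hM hMP
  have : NeZero p := ⟨hp.ne'⟩
  have hMp : M.Coprime p := hMP p (mem_insert_self _ _)
  have single_class : ∀ a ∈ S,
      |∑ n ∈ range X with n ≡ r [MOD M], (if (n : ZMod p) = a then g n else 0)
        - A / (M * p : ℕ)| ≤ E := by
    intro a _
    rw [← sum_filter, filter_filter, filter_modEq_and_natCast_eq hMp]
    exact h (M * p) _ (Nat.mul_pos hM hp) fun p' hp' ↦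
      (hMP p' (mem_insert_of_mem hp')).mul_left (hpP p' hp')
  have expand : ∑ n ∈ range X with n ≡ r [MOD M], (g n * if (n : ZMod p) ∈ S then (-1 : ℝ) else 0)
      = -∑ a ∈ S, ∑ n ∈ range X with n ≡ r [MOD M], (if (n : ZMod p) = a then g n else 0) := by
    rw [sum_comm, ← sum_neg_distrib]
    refine sum_congr rfl fun n _ ↦ ?_
    rw [sum_ite_eq]
    split_ifs <;> simp
  have mass : A * -(#S / p) / M = -∑ _a ∈ S, A / (M * p : ℕ) := by
    have : (M : ℝ) ≠ 0 := mod_cast hM.ne'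
    have : (p : ℝ) ≠ 0 := mod_cast hp.ne'
    rw [sum_const, nsmul_eq_mul]
    push_cast
    field_simp
  rw [expand, mass, ← neg_sub', abs_neg, ← sum_sub_distrib]
  calc |∑ a ∈ S, (∑ n ∈ range X with n ≡ r [MOD M], (if (n : ZMod p) = a then g n else 0)
        - A / (M * p : ℕ))|
      ≤ ∑ _a ∈ S, E := (abs_sum_le_sum_abs _ _).trans (sum_le_sum single_class)
    _ = E * #S := by rw [sum_const, nsmul_eq_mul, mul_comm]

lemma mul_prod_neg_indicator (h : Equidistributed X P g A E) (hP : ∀ p ∈ P, p.Prime)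
    {D : Finset ℕ} (hD : ∀ p ∈ D, p.Prime) (hDP : Disjoint D P) :
    Equidistributed X (D ∪ P)
      (fun n ↦ g n * ∏ p ∈ D, if (n : ZMod p) ∈ R p then -1 else 0)
      (A * ∏ p ∈ D, -(#(R p) / p : ℝ)) (E * ∏ p ∈ D, (#(R p) : ℝ)) := by
  induction D using Finset.induction_on with
  | empty => simpa using h
  | insert p D hpD ih =>
    rw [disjoint_insert_left] at hDP
    have hp := hD p (mem_insert_self _ _)
    have hD' : ∀ p' ∈ D, p'.Prime := fun p' hp' ↦ hD p' (mem_insert_of_mem hp')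
    have coprime : ∀ p' ∈ D ∪ P, p.Coprime p' := by
      intro p' hp'
      rw [Nat.coprime_primes hp ((mem_union.1 hp').elim (hD' p') (hP p'))]
      rintro rfl
      exact (mem_union.1 hp').elim hpD hDP.1
    convert (ih hD' hDP.2).mul_neg_indicator hp.pos coprime (R p) using 1
    · rw [insert_union]
    · funext n
      rw [prod_insert hpD]
      ring
    · rw [prod_insert hpD]
      ring
    · rw [prod_insert hpD]
      ring

lemma mul_siftWeight (h : Equidistributed X P g A E) (hP : ∀ p ∈ P, p.Prime) {D : Finset ℕ}
    (hD : ∀ p ∈ D, p.Prime) (hDP : Disjoint D P) (b : ℕ) :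
    Equidistributed X (D ∪ P) (fun n ↦ g n * siftWeight R D b n)
      (A * truncProd D (fun p ↦ -(#(R p) / p : ℝ)) b)
      (E * truncProd D (fun p ↦ (#(R p) : ℝ)) b) := by
  simp only [siftWeight, truncProd, mul_sum]
  refine sum fun D' hD' ↦ ?_
  have hD'D := mem_powerset.1 (mem_filter.1 hD').1
  exact (h.mul_prod_neg_indicator hP (fun p hp ↦ hD p (hD'D hp))
    (disjoint_of_subset_left hD'D hDP)).mono (union_subset_union_left hD'D)

variable {L : ℕ → Finset ℕ}

lemma prod_siftWeight (hL : ∀ j, ∀ p ∈ L j, p.Prime) (hd : Pairwise (Function.onFun Disjoint L))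
    (X : ℕ) (b : ℕ → ℕ) (J : ℕ) :
    Equidistributed X ((range J).biUnion L) (fun n ↦ ∏ j ∈ range J, siftWeight R (L j) (b j) n)
      (X * ∏ j ∈ range J, truncProd (L j) (fun p ↦ -(#(R p) / p : ℝ)) (b j))
      (∏ j ∈ range J, truncProd (L j) (fun p ↦ (#(R p) : ℝ)) (b j)) := by
  induction J with
  | zero => simpa using one X
  | succ J ih =>
    have primes : ∀ p ∈ (range J).biUnion L, p.Prime := fun p hp ↦
      let ⟨j, _, hj⟩ := mem_biUnion.1 hp
      hL j p hj
    have disj : Disjoint (L J) ((range J).biUnion L) :=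
      (disjoint_biUnion_right _ _ _).2 fun j hj ↦ hd (mem_range.1 hj).ne'
    simp only [prod_range_succ, ← mul_assoc]
    rw [range_add_one, biUnion_insert]
    exact ih.mul_siftWeight primes (hL J) disj (b J)

end Equidistributed

/-- The **Brun–Hooley sieve**: the sifting primes are split into levels `L j`, and
inclusion–exclusion is truncated in each level separately. -/
theorem brunHooley_card_le {L : ℕ → Finset ℕ} (hL : ∀ j, ∀ p ∈ L j, p.Prime)
    (hd : Pairwise (Function.onFun Disjoint L)) (b : ℕ → ℕ) {J M r : ℕ} (hM : 0 < M)
    (hML : ∀ j, ∀ p ∈ L j, M.Coprime p) {G : Finset ℕ} (hGX : ∀ n ∈ G, n < X)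
    (hGM : ∀ n ∈ G, n ≡ r [MOD M])
    (hGR : ∀ n ∈ G, ∀ j < J, ∀ p ∈ L j, (n : ZMod p) ∉ R p) :
    (#G : ℝ) ≤ X / M * ∏ j ∈ range J, truncProd (L j) (fun p ↦ -(#(R p) / p : ℝ)) (2 * b j) +
      ∏ j ∈ range J, truncProd (L j) (fun p ↦ (#(R p) : ℝ)) (2 * b j) := by
  set weight : ℕ → ℝ := fun n ↦ ∏ j ∈ range J, siftWeight R (L j) (2 * b j) n
  have card_le : (#G : ℝ) ≤ ∑ n ∈ range X with n ≡ r [MOD M], weight n :=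
    calc (#G : ℝ) = ∑ n ∈ G, weight n := by
          rw [card_eq_sum_ones, Nat.cast_sum]
          refine sum_congr rfl fun n hn ↦ ?_
          rw [Nat.cast_one]
          exact (prod_eq_one fun j hj ↦ siftWeight_eq_one (hGR n hn j (mem_range.1 hj)) _).symm
      _ ≤ ∑ n ∈ range X with n ≡ r [MOD M], weight n :=
          sum_le_sum_of_subset_of_nonneg
            (fun n hn ↦ mem_filter.2 ⟨mem_range.2 (hGX n hn), hGM n hn⟩)
            fun n _ _ ↦ prod_nonneg fun j _ ↦ siftWeight_nonneg _ _ _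
  have coprime : ∀ p ∈ (range J).biUnion L, M.Coprime p := fun p hp ↦
    let ⟨j, _, hj⟩ := mem_biUnion.1 hp
    hML j p hj
  have main := (abs_le.1
    (Equidistributed.prod_siftWeight (R := R) hL hd X (fun j ↦ 2 * b j) J M r hM coprime)).2
  rw [mul_div_right_comm] at main
  linarith

end Equidistribution

section PrimeSums

open Finset

lemma pow_card_filter_prime_Ioc_le (a b : ℕ) : a ^ #{p ∈ Ioc a b | p.Prime} ≤ 4 ^ b :=
  calc a ^ #{p ∈ Ioc a b | p.Prime} ≤ ∏ p ∈ Ioc a b with p.Prime, p := by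
        rw [← prod_const]
        exact prod_le_prod' fun p hp ↦ (mem_Ioc.1 (mem_filter.1 hp).1).1.le
    _ ≤ primorial b := by
        refine prod_le_prod_of_subset_of_one_le' (fun p hp ↦ ?_)
          fun p hp _ ↦ (mem_filter.1 hp).2.one_lt.le
        simp only [mem_filter, mem_Ioc, mem_range] at hp ⊢
        exact ⟨Nat.lt_succ_of_le hp.1.2, hp.2⟩
    _ ≤ 4 ^ b := primorial_le_four_pow b

lemma sum_one_div_prime_Ioc_two_pow_succ_le {i : ℕ} (hi : 0 < i) :
    ∑ p ∈ Ioc (2 ^ i) (2 ^ (i + 1)) with Nat.Prime p, 1 / (p : ℝ) ≤ 4 / i := by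
  set P := {p ∈ Ioc (2 ^ i) (2 ^ (i + 1)) | p.Prime}
  have card_le : (i : ℝ) * #P ≤ 4 * 2 ^ i := by
    have h := pow_card_filter_prime_Ioc_le (2 ^ i) (2 ^ (i + 1))
    rw [← pow_mul, show (4 : ℕ) = 2 ^ 2 by norm_num, ← pow_mul,
      Nat.pow_le_pow_iff_right one_lt_two, pow_succ] at h
    calc (i : ℝ) * #P ≤ 2 * (2 ^ i * 2) := mod_cast h
      _ = 4 * 2 ^ i := by ring
  calc ∑ p ∈ P, (1 : ℝ) / p ≤ ∑ _p ∈ P, (1 : ℝ) / 2 ^ i := by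
        refine sum_le_sum fun p hp ↦ ?_
        have : (2 : ℝ) ^ i ≤ p := mod_cast (mem_Ioc.1 (mem_filter.1 hp).1).1.le
        gcongr
    _ = #P / 2 ^ i := by rw [sum_const, nsmul_eq_mul, mul_one_div]
    _ ≤ 4 / i := by
        rw [div_le_div_iff₀ (by positivity) (by positivity)]
        linarith

lemma sum_one_div_prime_Ioc_two_pow_add_le {k : ℕ} (hk : 0 < k) (n : ℕ) :
    ∑ p ∈ Ioc (2 ^ k) (2 ^ (k + n)) with Nat.Prime p, 1 / (p : ℝ) ≤ n * (4 / k) := by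
  induction n with
  | zero => simp
  | succ n ih =>
    have block := sum_one_div_prime_Ioc_two_pow_succ_le (Nat.add_pos_left hk n)
    have : (4 : ℝ) / (k + n : ℕ) ≤ 4 / k := by
      gcongr
      exact Nat.le_add_right k n
    rw [sum_filter] at ih block ⊢
    rw [← add_assoc, ← sum_Ioc_consecutive _ (Nat.pow_le_pow_right two_pos (Nat.le_add_right k n))
      (Nat.pow_le_pow_right two_pos (Nat.le_add_right (k + n) 1))]
    push_cast
    linarith

lemma sum_one_div_prime_Ioc_two_pow_two_pow_le (j : ℕ) :
    ∑ p ∈ Ioc (2 ^ 2 ^ j) (2 ^ 2 ^ (j + 1)) with Nat.Prime p, 1 / (p : ℝ) ≤ 4 := by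
  have h := sum_one_div_prime_Ioc_two_pow_add_le (Nat.two_pow_pos j) (2 ^ j)
  rwa [mul_div_cancel₀ _ (by positivity), ← two_mul, ← pow_succ'] at h

/-- The easy half of Mertens' third theorem. -/
theorem prod_one_sub_one_div_primesLE_le {z : ℕ} (hz : 2 ≤ z) :
    ∏ p ∈ z.primesLE, (1 - 1 / (p : ℝ)) ≤ 1 / Real.log z := by
  let f : ℕ →* ℝ := (invMonoidWithZeroHom (G₀ := ℝ)).toMonoidHom.comp (Nat.castRingHom ℝ)
  have hf (n : ℕ) : f n = (n : ℝ)⁻¹ := rfl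
  have norm_lt_one {p : ℕ} (hp : p.Prime) : ‖f p‖ < 1 := by
    rw [hf, Real.norm_of_nonneg (by positivity)]
    exact inv_lt_one_of_one_lt₀ (mod_cast hp.one_lt)
  have euler := hasSum_subtype_iff_indicator.1
    (EulerProduct.summable_and_hasSum_smoothNumbers_prod_primesBelow_geometric norm_lt_one
      (z + 1)).2
  have log_le : Real.log z ≤ ∏ p ∈ z.primesLE, (1 - f p)⁻¹ :=
    calc Real.log z ≤ Real.log (z + 1 : ℕ) := Real.log_le_log (by positivity) (by simp)
      _ ≤ ∑ n ∈ Icc 1 z, (n : ℝ)⁻¹ := by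
        have := log_add_one_le_harmonic z
        rw [harmonic_eq_sum_Icc] at this
        push_cast at this ⊢
        exact this
      _ = ∑ n ∈ Icc 1 z, Set.indicator (Nat.smoothNumbers (z + 1)) f n := by
        refine sum_congr rfl fun n hn ↦ ?_
        have ⟨hn, hnz⟩ := mem_Icc.1 hn
        rw [Set.indicator_of_mem (Nat.mem_smoothNumbers_of_lt hn (Nat.lt_succ_of_le hnz)), hf]
      _ ≤ ∏ p ∈ z.primesLE, (1 - f p)⁻¹ :=
        sum_le_hasSum _ (fun n _ ↦ Set.indicator_nonneg (fun n _ ↦ by rw [hf]; positivity) n) euler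
  have log_pos : 0 < Real.log z := Real.log_pos (by exact_mod_cast hz)
  have := inv_anti₀ log_pos log_le
  rw [prod_inv_distrib, inv_inv] at this
  simpa only [one_div, hf] using this

end PrimeSums

section DoublyDyadicLevels

open Finset

/-- The elements of `P` in the doubly dyadic interval `(2 ^ 2 ^ j, 2 ^ 2 ^ (j + 1)]`. -/
def level (P : Finset ℕ) (j : ℕ) : Finset ℕ :=
  {p ∈ P | p ∈ Ioc (2 ^ 2 ^ j) (2 ^ 2 ^ (j + 1))}

variable {P : Finset ℕ} {m J : ℕ}

lemma pairwise_disjoint_level (P : Finset ℕ) : Pairwise (Function.onFun Disjoint (level P)) := by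
  refine (pairwise_disjoint_on (level P)).2 fun i j hij ↦ disjoint_left.2 fun p hpi hpj ↦ ?_
  have upper := (mem_Ioc.1 (mem_filter.1 hpi).2).2
  have lower := (mem_Ioc.1 (mem_filter.1 hpj).2).1
  have : 2 ^ 2 ^ (i + 1) ≤ 2 ^ 2 ^ j :=
    Nat.pow_le_pow_right two_pos (Nat.pow_le_pow_right two_pos hij)
  omega

lemma exists_mem_Ioc_two_pow_two_pow {n : ℕ} (hn : 2 < n) (hnJ : n ≤ 2 ^ 2 ^ J) :
    ∃ j < J, n ∈ Ioc (2 ^ 2 ^ j) (2 ^ 2 ^ (j + 1)) := by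
  induction J with
  | zero => omega
  | succ J ih =>
    by_cases h : n ≤ 2 ^ 2 ^ J
    · obtain ⟨j, hj, hnj⟩ := ih h
      exact ⟨j, hj.trans (Nat.lt_succ_self J), hnj⟩
    · exact ⟨J, Nat.lt_succ_self J, mem_Ioc.2 ⟨not_le.1 h, hnJ⟩⟩

lemma biUnion_level (hP : ∀ p ∈ P, 2 < p ∧ p ≤ 2 ^ 2 ^ J) :
    (range J).biUnion (level P) = P := by
  refine subset_antisymm (biUnion_subset.2 fun _ _ ↦ filter_subset _ _) fun p hp ↦ ?_
  obtain ⟨j, hj, hpj⟩ := exists_mem_Ioc_two_pow_two_pow (hP p hp).1 (hP p hp).2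
  exact mem_biUnion.2 ⟨j, mem_range.2 hj, mem_filter.2 ⟨hp, hpj⟩⟩

lemma prod_prod_level {f : ℕ → ℝ} (hP : ∀ p ∈ P, 2 < p ∧ p ≤ 2 ^ 2 ^ J) :
    ∏ j ∈ range J, ∏ p ∈ level P j, f p = ∏ p ∈ P, f p := by
  rw [← prod_biUnion fun i _ j _ hij ↦ pairwise_disjoint_level P hij, biUnion_level hP]

lemma sum_div_level_le (hP : ∀ p ∈ P, p.Prime) (m j : ℕ) :
    ∑ p ∈ level P j, (m : ℝ) / p ≤ 4 * m :=
  calc ∑ p ∈ level P j, (m : ℝ) / p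
      ≤ ∑ p ∈ Ioc (2 ^ 2 ^ j) (2 ^ 2 ^ (j + 1)) with Nat.Prime p, (m : ℝ) / p := by
        refine sum_le_sum_of_subset_of_nonneg (fun p hp ↦ ?_) fun p _ _ ↦ by positivity
        exact mem_filter.2 ⟨(mem_filter.1 hp).2, hP p (mem_filter.1 hp).1⟩
    _ = m * ∑ p ∈ Ioc (2 ^ 2 ^ j) (2 ^ 2 ^ (j + 1)) with Nat.Prime p, 1 / (p : ℝ) := by
        simp only [mul_sum, mul_one_div]
    _ ≤ 4 * m := by
        rw [mul_comm]
        gcongr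
        exact sum_one_div_prime_Ioc_two_pow_two_pow_le j

lemma one_sub_div_le_one_sub_one_div_pow {p : ℕ} (hp : 0 < p) (m : ℕ) :
    1 - (m : ℝ) / p ≤ (1 - 1 / (p : ℝ)) ^ m := by
  have : 1 / (p : ℝ) ≤ 1 := (div_le_one (by positivity)).2 (mod_cast hp)
  calc 1 - (m : ℝ) / p = 1 + m * -(1 / (p : ℝ)) := by ring
    _ ≤ (1 + -(1 / (p : ℝ))) ^ m := one_add_mul_le_pow (by linarith) m
    _ = (1 - 1 / (p : ℝ)) ^ m := by rw [← sub_eq_add_neg]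

-- The truncation parameter beats the mass `4 * m` of a level: `exp (16 * m) ≤ 4 ^ (16 * m)`.
lemma abs_truncProd_level_le (hP : ∀ p ∈ P, p.Prime) (hPm : ∀ p ∈ P, 2 * m ≤ p) (j k : ℕ) :
    |truncProd (level P j) (fun p ↦ -((m : ℝ) / p)) (2 * (16 * m + k))| ≤
      (1 + (1 / 4) ^ k) * (∏ p ∈ level P j, (1 - 1 / (p : ℝ))) ^ m := by
  have mem_P {p : ℕ} (hp : p ∈ level P j) : p ∈ P := (mem_filter.1 hp).1
  have density_le : ∀ p ∈ level P j, (m : ℝ) / p ≤ 1 / 2 := fun p hp ↦ by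
    have : (2 : ℝ) * m ≤ p := mod_cast hPm p (mem_P hp)
    rw [div_le_div_iff₀ (mod_cast (hP p (mem_P hp)).pos) two_pos]
    linarith
  have tail_le : Real.exp (4 * (4 * m)) / 2 ^ (2 * (16 * m + k)) ≤ (1 / 4) ^ k := by
    have exp_le : Real.exp (4 * (4 * m)) ≤ 4 ^ (16 * m) := by
      rw [show (4 * (4 * m) : ℝ) = (16 * m : ℕ) * 1 by push_cast; ring, Real.exp_nat_mul]
      gcongr
      linarith [Real.exp_one_lt_d9]
    calc Real.exp (4 * (4 * m)) / 2 ^ (2 * (16 * m + k))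
        ≤ 4 ^ (16 * m) / 2 ^ (2 * (16 * m + k)) := by gcongr
      _ = (1 / 4) ^ k := by
        rw [pow_mul (2 : ℝ), pow_add, ← div_div, show (2 : ℝ) ^ 2 = 4 by norm_num,
          div_self (by positivity), one_div_pow]
  have prod_le : ∏ p ∈ level P j, (1 - (m : ℝ) / p) ≤
      (∏ p ∈ level P j, (1 - 1 / (p : ℝ))) ^ m := by
    rw [← prod_pow]
    exact prod_le_prod (fun p hp ↦ by linarith [density_le p hp])
      fun p hp ↦ one_sub_div_le_one_sub_one_div_pow (hP p (mem_P hp)).pos m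
  calc |truncProd (level P j) (fun p ↦ -((m : ℝ) / p)) (2 * (16 * m + k))|
      ≤ (1 + Real.exp (4 * (4 * m)) / 2 ^ (2 * (16 * m + k))) *
          ∏ p ∈ level P j, (1 - (m : ℝ) / p) :=
        abs_truncProd_neg_le (fun _ _ ↦ by positivity) density_le (sum_div_level_le hP m j) _
    _ ≤ (1 + (1 / 4) ^ k) * (∏ p ∈ level P j, (1 - 1 / (p : ℝ))) ^ m :=
        mul_le_mul (by gcongr) prod_le
          (prod_nonneg fun p hp ↦ by linarith [density_le p hp]) (by positivity)

lemma truncProd_level_natCast_le (hPm : ∀ p ∈ P, m ≤ p) (j b : ℕ) :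
    truncProd (level P j) (fun _ ↦ (m : ℝ)) b ≤ 2 ^ (2 ^ (j + 2) * b) := by
  have base_le : m * #(level P j) + 1 ≤ 2 ^ 2 ^ (j + 2) := by
    obtain h | ⟨p, hp⟩ := (level P j).eq_empty_or_nonempty
    · simpa [h] using Nat.one_le_two_pow
    have hm : m ≤ 2 ^ 2 ^ (j + 1) :=
      (hPm p (mem_filter.1 hp).1).trans (mem_Ioc.1 (mem_filter.1 hp).2).2
    have card_lt : #(level P j) < 2 ^ 2 ^ (j + 1) := by
      have card_le := card_le_card
        (fun p hp ↦ (mem_filter.1 hp).2 : level P j ⊆ Ioc (2 ^ 2 ^ j) (2 ^ 2 ^ (j + 1)))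
      rw [Nat.card_Ioc] at card_le
      have := Nat.two_pow_pos (2 ^ j)
      have := Nat.two_pow_pos (2 ^ (j + 1))
      omega
    calc m * #(level P j) + 1 ≤ 2 ^ 2 ^ (j + 1) * #(level P j) + 2 ^ 2 ^ (j + 1) :=
          add_le_add (Nat.mul_le_mul_right _ hm) Nat.one_le_two_pow
      _ = 2 ^ 2 ^ (j + 1) * (#(level P j) + 1) := by ring
      _ ≤ 2 ^ 2 ^ (j + 1) * 2 ^ 2 ^ (j + 1) := Nat.mul_le_mul_left _ card_lt
      _ = 2 ^ 2 ^ (j + 2) := by ring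
  calc truncProd (level P j) (fun _ ↦ (m : ℝ)) b ≤ (m * #(level P j) + 1 : ℝ) ^ b :=
        truncProd_const_le (by positivity) _ b
    _ ≤ (2 ^ 2 ^ (j + 2)) ^ b := by
        gcongr
        exact_mod_cast base_le
    _ = 2 ^ (2 ^ (j + 2) * b) := (pow_mul _ _ _).symm

lemma sum_quarter_pow_sub_le (J : ℕ) : ∑ j ∈ range J, (1 / 4 : ℝ) ^ (J - j) ≤ 1 := by
  induction J with
  | zero => simp
  | succ J ih =>
    have shift : ∑ j ∈ range J, (1 / 4 : ℝ) ^ (J + 1 - j) =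
        (∑ j ∈ range J, (1 / 4 : ℝ) ^ (J - j)) * (1 / 4) := by
      rw [sum_mul]
      refine sum_congr rfl fun j hj ↦ ?_
      rw [Nat.succ_sub (mem_range.1 hj).le, pow_succ]
    rw [sum_range_succ, shift, Nat.add_sub_cancel_left]
    linarith

lemma sum_two_pow_mul_add_sub (J c : ℕ) :
    ∑ j ∈ range J, 2 ^ (j + 3) * (c + (J - j)) + 8 * (c + J + 2) = 2 ^ J * (8 * (c + 2)) := by
  induction J generalizing c with
  | zero => simp
  | succ J ih =>
    have shift : ∑ j ∈ range J, 2 ^ (j + 3) * (c + (J + 1 - j)) =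
        ∑ j ∈ range J, 2 ^ (j + 3) * (c + 1 + (J - j)) := by
      refine sum_congr rfl fun j hj ↦ ?_
      rw [Nat.succ_sub (mem_range.1 hj).le, add_assoc c, add_comm 1]
    rw [sum_range_succ, shift, Nat.add_sub_cancel_left, pow_succ 2 J, pow_add 2 J 3]
    linarith [ih (c + 1)]

lemma prod_truncProd_level_le (hP : ∀ p ∈ P, p.Prime) (hPm : ∀ p ∈ P, 2 * m ≤ p)
    (hPJ : ∀ p ∈ P, 2 < p ∧ p ≤ 2 ^ 2 ^ J) :
    ∏ j ∈ range J, truncProd (level P j) (fun p ↦ -((m : ℝ) / p)) (2 * (16 * m + (J - j))) ≤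
      3 * (∏ p ∈ P, (1 - 1 / (p : ℝ))) ^ m := by
  have prod_nonneg : 0 ≤ ∏ p ∈ P, (1 - 1 / (p : ℝ)) := prod_nonneg fun p hp ↦
    sub_nonneg.2 ((div_le_one (mod_cast (hP p hp).pos)).2 (mod_cast (hP p hp).one_le))
  have prod_tails_le : ∏ j ∈ range J, (1 + (1 / 4 : ℝ) ^ (J - j)) ≤ 3 :=
    calc ∏ j ∈ range J, (1 + (1 / 4 : ℝ) ^ (J - j))
        ≤ Real.exp (∑ j ∈ range J, (1 / 4 : ℝ) ^ (J - j)) :=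
          Real.prod_one_add_le_exp_sum _ fun j ↦ by positivity
      _ ≤ Real.exp 1 := Real.exp_le_exp.2 (sum_quarter_pow_sub_le J)
      _ ≤ 3 := by linarith [Real.exp_one_lt_d9]
  calc ∏ j ∈ range J, truncProd (level P j) (fun p ↦ -((m : ℝ) / p)) (2 * (16 * m + (J - j)))
      ≤ ∏ j ∈ range J,
          |truncProd (level P j) (fun p ↦ -((m : ℝ) / p)) (2 * (16 * m + (J - j)))| :=
        (le_abs_self _).trans (abs_prod _ _).le
    _ ≤ ∏ j ∈ range J, ((1 + (1 / 4 : ℝ) ^ (J - j)) *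
          (∏ p ∈ level P j, (1 - 1 / (p : ℝ))) ^ m) :=
        prod_le_prod (fun _ _ ↦ abs_nonneg _) fun j _ ↦ abs_truncProd_level_le hP hPm j (J - j)
    _ = (∏ j ∈ range J, (1 + (1 / 4 : ℝ) ^ (J - j))) * (∏ p ∈ P, (1 - 1 / (p : ℝ))) ^ m := by
        rw [prod_mul_distrib, prod_pow, prod_prod_level hPJ]
    _ ≤ 3 * (∏ p ∈ P, (1 - 1 / (p : ℝ))) ^ m := by gcongr

lemma prod_truncProd_level_natCast_le (hPm : ∀ p ∈ P, m ≤ p) (J : ℕ) :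
    ∏ j ∈ range J, truncProd (level P j) (fun _ ↦ (m : ℝ)) (2 * (16 * m + (J - j))) ≤
      2 ^ (2 ^ J * (128 * m + 16)) :=
  calc ∏ j ∈ range J, truncProd (level P j) (fun _ ↦ (m : ℝ)) (2 * (16 * m + (J - j)))
      ≤ ∏ j ∈ range J, (2 : ℝ) ^ (2 ^ (j + 2) * (2 * (16 * m + (J - j)))) :=
        prod_le_prod (fun j _ ↦ sum_nonneg fun D _ ↦ prod_nonneg fun p _ ↦ Nat.cast_nonneg m)
          fun j _ ↦ truncProd_level_natCast_le hPm j _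
    _ = 2 ^ ∑ j ∈ range J, 2 ^ (j + 3) * (16 * m + (J - j)) := by
        rw [prod_pow_eq_pow_sum]
        congr 1
        exact sum_congr rfl fun j _ ↦ by ring
    _ ≤ 2 ^ (2 ^ J * (128 * m + 16)) := by
        have := sum_two_pow_mul_add_sub J (16 * m)
        refine pow_le_pow_right₀ one_le_two ?_
        linarith

theorem card_le_of_forall_notMem_of_card_eq {R : ∀ p : ℕ, Finset (ZMod p)} {X M r : ℕ}
    {G : Finset ℕ} (hP : ∀ p ∈ P, p.Prime) (hPm : ∀ p ∈ P, 2 * m ≤ p)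
    (hPJ : ∀ p ∈ P, 2 < p ∧ p ≤ 2 ^ 2 ^ J) (hR : ∀ p ∈ P, #(R p) = m) (hM : 0 < M)
    (hMP : ∀ p ∈ P, M.Coprime p) (hGX : ∀ n ∈ G, n < X) (hGM : ∀ n ∈ G, n ≡ r [MOD M])
    (hGR : ∀ n ∈ G, ∀ p ∈ P, (n : ZMod p) ∉ R p) :
    (#G : ℝ) ≤ X / M * (3 * (∏ p ∈ P, (1 - 1 / (p : ℝ))) ^ m) +
      2 ^ (2 ^ J * (128 * m + 16)) := by
  have mem_P {p j : ℕ} (hp : p ∈ level P j) : p ∈ P := (mem_filter.1 hp).1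
  have sieve := brunHooley_card_le (fun j p hp ↦ hP p (mem_P hp)) (pairwise_disjoint_level P)
    (fun j ↦ 16 * m + (J - j)) (J := J) hM (fun j p hp ↦ hMP p (mem_P hp)) hGX hGM
    (fun n hn j _ p hp ↦ hGR n hn p (mem_P hp))
  have main_eq (j : ℕ) : truncProd (level P j) (fun p ↦ -(#(R p) / p : ℝ)) =
      truncProd (level P j) fun p ↦ -(m / p : ℝ) :=
    truncProd_congr fun p hp ↦ by rw [hR p (mem_P hp)]
  have error_eq (j : ℕ) : truncProd (level P j) (fun p ↦ (#(R p) : ℝ)) =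
      truncProd (level P j) fun _ ↦ (m : ℝ) :=
    truncProd_congr fun p hp ↦ by rw [hR p (mem_P hp)]
  simp only [main_eq, error_eq] at sieve
  refine sieve.trans (add_le_add ?_ (prod_truncProd_level_natCast_le ?_ J))
  · gcongr
    exact prod_truncProd_level_le hP hPm hPJ
  · exact fun p hp ↦ by linarith [hPm p hp]

end DoublyDyadicLevels

section PrimeTuples

open Finset

lemma card_filter_lt_primeFactors_le {w : ℕ} (hw : 1 < w) (d : ℕ) :
    #{p ∈ d.primeFactors | w < p} ≤ Nat.log w d := by
  rcases eq_or_ne d 0 with rfl | hd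
  · simp
  refine Nat.le_log_of_pow_le hw ?_
  calc w ^ #{p ∈ d.primeFactors | w < p}
      = ∏ p ∈ d.primeFactors with w < p, w := (prod_const w).symm
    _ ≤ ∏ p ∈ d.primeFactors with w < p, p :=
        prod_le_prod' fun p hp ↦ (mem_filter.1 hp).2.le
    _ ≤ ∏ p ∈ d.primeFactors, p :=
        prod_le_prod_of_subset_of_one_le' (filter_subset _ _)
          fun p hp _ ↦ (Nat.prime_of_mem_primeFactors hp).one_le
    _ ≤ d := Nat.le_of_dvd (Nat.pos_of_ne_zero hd) (Nat.prod_primeFactors_dvd d)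

lemma totient_div_self_eq_prod_primeFactors {M : ℕ} (hM : 0 < M) :
    (M.totient / M : ℝ) = ∏ p ∈ M.primeFactors, (1 - 1 / (p : ℝ)) := by
  have totient_eq : (M.totient : ℝ) = M * ∏ p ∈ M.primeFactors, (1 - (p : ℝ)⁻¹) := by
    simpa using congrArg (Rat.cast : ℚ → ℝ) M.totient_eq_mul_prod_factors
  simp only [totient_eq, one_div]
  exact mul_div_cancel_left₀ _ (mod_cast hM.ne')

lemma half_le_prod_one_sub_one_div_pow {B : Finset ℕ} {w m : ℕ} (hw : 1 < w)
    (hB : ∀ p ∈ B, w ≤ p) (hBw : 2 * (#B * m) ≤ w) :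
    1 / 2 ≤ (∏ p ∈ B, (1 - 1 / (p : ℝ))) ^ m := by
  have w_pos : (0 : ℝ) < w := by exact_mod_cast hw.le
  have inv_le_one : 1 / (w : ℝ) ≤ 1 := (div_le_one w_pos).2 (mod_cast hw.le)
  have bernoulli := one_add_mul_le_pow (a := -(1 / (w : ℝ))) (by linarith) (#B * m)
  have mul_inv_le : ((#B * m : ℕ) : ℝ) * (1 / w) ≤ 1 / 2 := by
    rw [mul_one_div, div_le_div_iff₀ w_pos two_pos]
    exact_mod_cast (by lia : #B * m * 2 ≤ 1 * w)
  calc 1 / 2 ≤ (1 - 1 / (w : ℝ)) ^ (#B * m) := by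
        rw [← sub_eq_add_neg] at bernoulli
        linarith
    _ = (∏ p ∈ B, (1 - 1 / (w : ℝ))) ^ m := by rw [prod_const, pow_mul]
    _ ≤ (∏ p ∈ B, (1 - 1 / (p : ℝ))) ^ m := by
        gcongr with p hp
        exact hB p hp

variable {H : Finset ℕ} {w z M J Y : ℕ}

open Classical in
/-- The primes in `(w, z]` modulo which the shifts `H` are distinct. Sifting a set of `n` by such a
prime, so that no `n + h` is divisible by it, removes exactly `#H` residue classes. -/
noncomputable def siftingPrimes (H : Finset ℕ) (w z : ℕ) : Finset ℕ :=
  {p ∈ z.primesLE | w < p ∧ Set.InjOn (Nat.cast : ℕ → ZMod p) H}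

lemma mem_siftingPrimes {p : ℕ} : p ∈ siftingPrimes H w z ↔
    (p ≤ z ∧ p.Prime) ∧ w < p ∧ Set.InjOn (Nat.cast : ℕ → ZMod p) H := by
  rw [siftingPrimes, mem_filter, Nat.mem_primesLE]

open Classical in
/-- The primes in `(w, z]` left out of `siftingPrimes H w z`: those that divide a difference of two
elements of `H`. -/
noncomputable def collidingPrimes (H : Finset ℕ) (w z : ℕ) : Finset ℕ :=
  {p ∈ z.primesLE | w < p ∧ ¬ Set.InjOn (Nat.cast : ℕ → ZMod p) H}

lemma mem_collidingPrimes {p : ℕ} : p ∈ collidingPrimes H w z ↔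
    (p ≤ z ∧ p.Prime) ∧ w < p ∧ ¬ Set.InjOn (Nat.cast : ℕ → ZMod p) H := by
  rw [collidingPrimes, mem_filter, Nat.mem_primesLE]

lemma prod_primesLE_eq_mul_prod_siftingPrimes_mul {R : Type*} [CommMonoid R] (hwz : w ≤ z)
    (f : ℕ → R) :
    ∏ p ∈ z.primesLE, f p =
      (∏ p ∈ w.primesLE, f p) * (∏ p ∈ siftingPrimes H w z, f p) *
        ∏ p ∈ collidingPrimes H w z, f p := by
  classical
  have primesLE_eq : w.primesLE = {p ∈ z.primesLE | ¬ w < p} := by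
    ext p
    simp only [mem_filter, Nat.mem_primesLE]
    grind
  rw [← prod_filter_not_mul_prod_filter z.primesLE (w < ·) f, primesLE_eq,
    ← prod_filter_mul_prod_filter_not {p ∈ z.primesLE | w < p}
      (fun p ↦ Set.InjOn (Nat.cast : ℕ → ZMod p) H) f,
    filter_filter, filter_filter, mul_assoc]
  rfl

lemma card_collidingPrimes_le (hw : 1 < w) (hH : ∀ h ∈ H, h ≤ Y) :
    #(collidingPrimes H w z) ≤ #H ^ 2 * Nat.log w Y := by
  have subset : collidingPrimes H w z ⊆ (H ×ˢ H).biUnion fun hh ↦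
      {p ∈ (hh.1 - hh.2 : ℤ).natAbs.primeFactors | w < p} := by
    intro p hp
    obtain ⟨⟨-, p_prime⟩, w_lt_p, not_injOn⟩ := mem_collidingPrimes.1 hp
    simp only [Set.InjOn, not_forall] at not_injOn
    obtain ⟨h, hh, h', hh', cast_eq, h_ne⟩ := not_injOn
    refine mem_biUnion.2 ⟨(h, h'), mem_product.2 ⟨hh, hh'⟩, mem_filter.2 ⟨?_, w_lt_p⟩⟩
    refine Nat.mem_primeFactors.2 ⟨p_prime, ?_, by lia⟩
    rw [← Int.natCast_dvd, ← ZMod.intCast_zmod_eq_zero_iff_dvd]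
    simp [cast_eq]
  rw [sq, ← card_product]
  refine (card_le_card subset).trans (card_biUnion_le_card_mul _ _ _ fun hh mem ↦ ?_)
  obtain ⟨h₁, h₂⟩ := mem_product.1 mem
  refine (card_filter_lt_primeFactors_le hw _).trans (Nat.log_mono_right ?_)
  grind

lemma totient_div_mul_prod_siftingPrimes_pow_le (hw : 1 < w) (hwz : w ≤ z)
    (hH : ∀ h ∈ H, h ≤ Y) (hHw : 2 * #H ^ 3 * Nat.log w Y ≤ w) (hM : 0 < M)
    (hMw : M.primeFactors = w.primesLE) :
    (M.totient / M * ∏ p ∈ siftingPrimes H w z, (1 - 1 / (p : ℝ))) ^ #H ≤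
      2 * (1 / Real.log z) ^ #H := by
  have half_le : 1 / 2 ≤ (∏ p ∈ collidingPrimes H w z, (1 - 1 / (p : ℝ))) ^ #H := by
    refine half_le_prod_one_sub_one_div_pow hw
      (fun p hp ↦ (mem_collidingPrimes.1 hp).2.1.le) (le_trans ?_ hHw)
    calc 2 * (#(collidingPrimes H w z) * #H) ≤ 2 * (#H ^ 2 * Nat.log w Y * #H) := by
          gcongr
          exact card_collidingPrimes_le hw hH
      _ = 2 * #H ^ 3 * Nat.log w Y := by ring
  have factor_nonneg {s : Finset ℕ} (hs : ∀ p ∈ s, p.Prime) :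
      0 ≤ ∏ p ∈ s, (1 - 1 / (p : ℝ)) := prod_nonneg fun p hp ↦
    sub_nonneg.2 ((div_le_one (mod_cast (hs p hp).pos)).2 (mod_cast (hs p hp).one_le))
  have mertens := prod_one_sub_one_div_primesLE_le (hw.trans_le hwz)
  rw [prod_primesLE_eq_mul_prod_siftingPrimes_mul (H := H) hwz, ← hMw,
    ← totient_div_self_eq_prod_primeFactors hM] at mertens
  have sifting_nonneg := factor_nonneg (s := siftingPrimes H w z)
    fun p hp ↦ (mem_siftingPrimes.1 hp).1.2
  have colliding_nonneg := factor_nonneg (s := collidingPrimes H w z)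
    fun p hp ↦ (mem_collidingPrimes.1 hp).1.2
  have mertens_pow := pow_le_pow_left₀ (by positivity) mertens #H
  rw [mul_pow] at mertens_pow
  set V := (M.totient / M * ∏ p ∈ siftingPrimes H w z, (1 - 1 / (p : ℝ))) ^ #H
  have V_nonneg : 0 ≤ V := by positivity
  nlinarith

lemma card_le_of_forall_not_dvd_add {X r : ℕ} {G : Finset ℕ} (hHw : 2 * #H ≤ w) (hw : 1 < w)
    (hM : 0 < M) (hMw : M.primeFactors = w.primesLE)
    (hGX : ∀ n ∈ G, n < X) (hGM : ∀ n ∈ G, n ≡ r [MOD M])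
    (hGH : ∀ n ∈ G, ∀ p, p.Prime → p ≤ 2 ^ 2 ^ J → ∀ h ∈ H, ¬ p ∣ n + h) :
    (#G : ℝ) ≤ X / M * (3 * (∏ p ∈ siftingPrimes H w (2 ^ 2 ^ J), (1 - 1 / (p : ℝ))) ^ #H) +
      2 ^ (2 ^ J * (128 * #H + 16)) := by
  refine card_le_of_forall_notMem_of_card_eq (R := fun p ↦ H.image fun h : ℕ ↦ -(h : ZMod p))
    ?_ ?_ ?_ ?_ hM ?_ hGX hGM ?_
  · exact fun p hp ↦ (mem_siftingPrimes.1 hp).1.2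
  · exact fun p hp ↦ hHw.trans (mem_siftingPrimes.1 hp).2.1.le
  · exact fun p hp ↦ ⟨lt_of_le_of_lt hw (mem_siftingPrimes.1 hp).2.1, (mem_siftingPrimes.1 hp).1.1⟩
  · intro p hp
    exact card_image_of_injOn fun h hh h' hh' eq ↦
      (mem_siftingPrimes.1 hp).2.2 hh hh' (neg_injective eq)
  · intro p hp
    obtain ⟨⟨-, p_prime⟩, w_lt_p, -⟩ := mem_siftingPrimes.1 hp
    refine ((Nat.Prime.coprime_iff_not_dvd p_prime).2 fun p_dvd ↦ ?_).symm
    have p_mem := Nat.mem_primeFactors.2 ⟨p_prime, p_dvd, hM.ne'⟩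
    rw [hMw, Nat.mem_primesLE] at p_mem
    exact p_mem.1.not_gt w_lt_p
  · intro n hn p hp mem
    obtain ⟨⟨p_le, p_prime⟩, -⟩ := mem_siftingPrimes.1 hp
    obtain ⟨h, hh, neg_eq⟩ := mem_image.1 mem
    refine hGH n hn p p_prime p_le h hh ((ZMod.natCast_eq_zero_iff _ p).1 ?_)
    rw [Nat.cast_add, ← neg_eq, neg_add_cancel]

lemma two_pow_div_two_le_log_two_pow_two_pow (J : ℕ) :
    (2 ^ J / 2 : ℝ) ≤ Real.log (2 ^ 2 ^ J : ℕ) := by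
  rw [Nat.cast_pow, Real.log_pow]
  push_cast
  have := Real.log_two_gt_d9
  nlinarith [pow_pos (two_pos (α := ℝ)) J]

lemma two_pow_le_div_mul_pow {X m : ℕ} (hm : 0 < m) (hX : 2 ^ (300 * m * 2 ^ J) ≤ X) (hM : 0 < M)
    (hMJ : M ≤ 2 ^ J) :
    (2 : ℝ) ^ (2 ^ J * (128 * m + 16)) ≤ X / M * (2 * M / (M.totient * 2 ^ J)) ^ m := by
  have J_le : J ≤ 2 ^ J := Nat.lt_two_pow_self.le
  have one_div_le : (1 / 2 ^ J : ℝ) ≤ 2 * M / (M.totient * 2 ^ J) := by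
    have : (0 : ℝ) < M.totient := by exact_mod_cast Nat.totient_pos.2 hM
    have totient_le : (M.totient : ℝ) ≤ M := by exact_mod_cast M.totient_le
    rw [div_le_div_iff₀ (by positivity) (by positivity)]
    nlinarith [pow_pos (two_pos (α := ℝ)) J]
  calc (2 : ℝ) ^ (2 ^ J * (128 * m + 16))
      = 2 ^ (2 ^ J * (128 * m + 16) + J + J * m) / 2 ^ J * (1 / 2 ^ J) ^ m := by
        rw [pow_add, pow_add, div_pow, one_pow, ← pow_mul]
        field_simp
    _ ≤ 2 ^ (300 * m * 2 ^ J) / 2 ^ J * (1 / 2 ^ J) ^ m := by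
        gcongr
        · norm_num
        · nlinarith
    _ ≤ X / M * (2 * M / (M.totient * 2 ^ J)) ^ m := by
        gcongr
        · exact_mod_cast hX
        · exact_mod_cast hMJ

theorem card_le_of_forall_not_dvd_add_of_two_pow_le {X r : ℕ} {G : Finset ℕ} (hH : H.Nonempty)
    (hHY : ∀ h ∈ H, h ≤ Y) (hHw : 2 * #H ≤ w) (hHwY : 2 * #H ^ 3 * Nat.log w Y ≤ w)
    (hwJ : w ≤ 2 ^ 2 ^ J) (hM : 0 < M) (hMw : M.primeFactors = w.primesLE) (hMJ : M ≤ 2 ^ J)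
    (hX : 2 ^ (300 * #H * 2 ^ J) ≤ X) (hGX : ∀ n ∈ G, n < X) (hGM : ∀ n ∈ G, n ≡ r [MOD M])
    (hGH : ∀ n ∈ G, ∀ p, p.Prime → p ≤ 2 ^ 2 ^ J → ∀ h ∈ H, ¬ p ∣ n + h) :
    (#G : ℝ) ≤ 7 * (X / M * (2 * M / (M.totient * 2 ^ J)) ^ #H) := by
  have one_lt_w : 1 < w := by linarith [hH.card_pos]
  have : (0 : ℝ) < M.totient := by exact_mod_cast Nat.totient_pos.2 hM
  set V := ∏ p ∈ siftingPrimes H w (2 ^ 2 ^ J), (1 - 1 / (p : ℝ))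
  have pow_le : V ^ #H ≤ 2 * (2 * M / (M.totient * 2 ^ J)) ^ #H :=
    calc V ^ #H = (M / M.totient) ^ #H * (M.totient / M * V) ^ #H := by
          rw [← mul_pow]
          field_simp
      _ ≤ (M / M.totient) ^ #H * (2 * (1 / Real.log (2 ^ 2 ^ J : ℕ)) ^ #H) := by
          gcongr
          exact totient_div_mul_prod_siftingPrimes_pow_le one_lt_w hwJ hHY hHwY hM hMw
      _ ≤ (M / M.totient) ^ #H * (2 * (1 / (2 ^ J / 2)) ^ #H) := by
          gcongr
          exact two_pow_div_two_le_log_two_pow_two_pow J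
      _ = 2 * (2 * M / (M.totient * 2 ^ J)) ^ #H := by
          rw [mul_left_comm, ← mul_pow]
          field_simp
  have error_le := two_pow_le_div_mul_pow hH.card_pos hX hM hMJ
  calc (#G : ℝ) ≤ X / M * (3 * V ^ #H) + 2 ^ (2 ^ J * (128 * #H + 16)) :=
        card_le_of_forall_not_dvd_add hHw one_lt_w hM hMw hGX hGM hGH
    _ ≤ X / M * (3 * (2 * (2 * M / (M.totient * 2 ^ J)) ^ #H)) +
          X / M * (2 * M / (M.totient * 2 ^ J)) ^ #H := by gcongr
    _ = 7 * (X / M * (2 * M / (M.totient * 2 ^ J)) ^ #H) := by ring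

end PrimeTuples

section ConsecutivePrimes

open Finset

local notation "𝓅" => Nat.nth Nat.Prime

lemma strictMono_nth_prime : StrictMono 𝓅 :=
  Nat.nth_strictMono Nat.infinite_setOfPred_prime

/-- The distance from the prime of index `n` (counted from `0`) to the `i`-th prime after it. -/
noncomputable def primeGap (n i : ℕ) : ℕ := 𝓅 (n + i) - 𝓅 n

lemma add_primeGap (n i : ℕ) : 𝓅 n + primeGap n i = 𝓅 (n + i) :=
  Nat.add_sub_cancel' (strictMono_nth_prime.monotone (Nat.le_add_right n i))

lemma strictMono_primeGap (n : ℕ) : StrictMono (primeGap n) := fun i j hij ↦ by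
  have := strictMono_nth_prime (Nat.add_lt_add_left hij n)
  have := add_primeGap n i
  have := add_primeGap n j
  lia

/-- The prime of index `n` lies in `(z, X)` and the `k` primes after it all follow within distance
`Y`. -/
structure IsTight (k z X Y n : ℕ) : Prop where
  lt_nth : z < 𝓅 n
  nth_lt : 𝓅 n < X
  primeGap_le : primeGap n k ≤ Y

/-- The consecutive primes from index `n` on reduce to the tuple `a` of reduced residues. -/
def HasPattern {q m : ℕ} (a : Fin m → (ZMod q)ˣ) (n : ℕ) : Prop :=
  ∀ i : Fin m, (𝓅 (n + i) : ZMod q) = a i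

variable {q m M k n w J X Y : ℕ}

lemma exists_hasPattern (m : ℕ) (hq : q ≠ 0) (hn : ∀ p ∈ q.primeFactors, p < 𝓅 n) :
    ∃ a : Fin m → (ZMod q)ˣ, HasPattern a n := by
  have coprime (i : Fin m) : (𝓅 (n + i)).Coprime q := by
    refine (Nat.prime_nth_prime _).coprime_iff_not_dvd.2 fun dvd ↦ ?_
    refine (hn _ (Nat.mem_primeFactors.2 ⟨Nat.prime_nth_prime _, dvd, hq⟩)).not_ge ?_
    exact strictMono_nth_prime.monotone (Nat.le_add_right n i)
  exact ⟨fun i ↦ ZMod.unitOfCoprime _ (coprime i), fun i ↦ rfl⟩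

lemma HasPattern.unitsMap_comp_eq {u : Fin m → (ZMod M)ˣ} {a : Fin m → (ZMod q)ˣ}
    (hu : HasPattern u n) (ha : HasPattern a n) (hq : q ∣ M) : ZMod.unitsMap hq ∘ u = a := by
  ext i
  rw [Function.comp_apply, ZMod.unitsMap_val, ← hu i, ZMod.cast_natCast hq, ha i]

lemma card_filter_eq_mul_card_of_surjective {G H : Type*} [Group G] [Group H] [Fintype G]
    [Fintype H] [DecidableEq H] {f : G →* H} (hf : Function.Surjective f) (h : H) :
    #{g | f g = h} * Fintype.card H = Fintype.card G := by
  have fiber_eq (h' : H) : #{g | f g = h'} = #{g | f g = h} :=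
    MonoidHom.card_fiber_eq_of_mem_range f (hf h') (hf h)
  calc #{g | f g = h} * Fintype.card H = ∑ h' : H, #{g | f g = h'} := by
        rw [sum_congr rfl fun h' _ ↦ fiber_eq h', sum_const, card_univ, smul_eq_mul, mul_comm]
    _ = Fintype.card G := (card_eq_sum_card_fiberwise (by simp)).symm

lemma card_filter_unitsMap_comp_eq [NeZero q] [NeZero M] (hq : q ∣ M) (a : Fin m → (ZMod q)ˣ) :
    (#{u : Fin m → (ZMod M)ˣ | ZMod.unitsMap hq ∘ u = a} : ℝ) =
      (M.totient / q.totient) ^ m := by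
  have card_mul := card_filter_eq_mul_card_of_surjective
    (f := (ZMod.unitsMap hq).compLeft (Fin m)) (ZMod.unitsMap_surjective hq).comp_left a
  simp only [Fintype.card_pi, ZMod.card_units_eq_totient, prod_const, card_univ,
    Fintype.card_fin] at card_mul
  have totient_pos : (0 : ℝ) < q.totient := by exact_mod_cast Nat.totient_pos.2 (NeZero.pos q)
  rw [div_pow, eq_div_iff (by positivity)]
  exact_mod_cast card_mul

/-- The quotients by `M` of the first `k` gaps from index `n`, made strictly increasing by adding
their position, and then recorded as a set. -/
noncomputable def gapCode (M k n : ℕ) : Finset ℕ :=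
  univ.image fun i : Fin k ↦ primeGap n (i + 1) / M + i

lemma strictMono_primeGap_div_add (M k n : ℕ) :
    StrictMono fun i : Fin k ↦ primeGap n (i + 1) / M + i := fun i j hij ↦
  add_lt_add_of_le_of_lt (Nat.div_le_div_right ((strictMono_primeGap n).monotone (by lia))) hij

lemma gapCode_mem_powersetCard (M : ℕ) (hY : primeGap n k ≤ Y) :
    gapCode M k n ∈ powersetCard k (range (Y / M + k)) := by
  refine mem_powersetCard.2 ⟨fun c hc ↦ ?_, ?_⟩
  · obtain ⟨i, -, rfl⟩ := mem_image.1 hc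
    have gap_le : primeGap n (i + 1) ≤ Y := ((strictMono_primeGap n).monotone (by lia)).trans hY
    exact mem_range.2 (add_lt_add_of_le_of_lt (Nat.div_le_div_right gap_le) i.2)
  · rw [gapCode, card_image_of_injective _ (strictMono_primeGap_div_add M k n).injective,
      card_univ, Fintype.card_fin]

lemma HasPattern.primeGap_modEq {n' : ℕ} {u : Fin (k + 1) → (ZMod M)ˣ} (hn : HasPattern u n)
    (hn' : HasPattern u n') {i : ℕ} (hi : i ≤ k) : primeGap n i ≡ primeGap n' i [MOD M] := by
  have nth_modEq {j : ℕ} (hj : j ≤ k) : 𝓅 (n + j) ≡ 𝓅 (n' + j) [MOD M] :=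
    (ZMod.natCast_eq_natCast_iff _ _ _).1
      ((hn ⟨j, Nat.lt_succ_of_le hj⟩).trans (hn' ⟨j, Nat.lt_succ_of_le hj⟩).symm)
  refine Nat.ModEq.add_left_cancel (nth_modEq k.zero_le) ?_
  simpa only [add_zero, add_primeGap] using nth_modEq hi

lemma primeGap_eq_of_gapCode_eq {n' : ℕ} {u : Fin (k + 1) → (ZMod M)ˣ} (hn : HasPattern u n)
    (hn' : HasPattern u n') (hcode : gapCode M k n = gapCode M k n') {i : ℕ} (hi : i ≤ k) :
    primeGap n i = primeGap n' i := by
  rcases i with _ | i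
  · simp [primeGap]
  have range_eq : Set.range (fun i : Fin k ↦ primeGap n (i + 1) / M + i) =
      Set.range (fun i : Fin k ↦ primeGap n' (i + 1) / M + i) := by
    simpa [gapCode] using congrArg (SetLike.coe : Finset ℕ → Set ℕ) hcode
  have fun_eq := ((strictMono_primeGap_div_add M k n).range_inj
    (strictMono_primeGap_div_add M k n')).1 range_eq
  have div_eq : primeGap n (i + 1) / M = primeGap n' (i + 1) / M :=
    Nat.add_right_cancel (congrFun fun_eq ⟨i, hi⟩)
  rw [← Nat.div_add_mod (primeGap n (i + 1)) M, div_eq, hn.primeGap_modEq hn' hi,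
    Nat.div_add_mod]

theorem card_le_of_forall_hasPattern_of_forall_gapCode_eq {u : Fin (k + 1) → (ZMod M)ˣ}
    {c G : Finset ℕ} (hkw : 2 * (k + 1) ≤ w) (hkwY : 2 * (k + 1) ^ 3 * Nat.log w Y ≤ w)
    (hwJ : w ≤ 2 ^ 2 ^ J) (hM : 0 < M) (hMw : M.primeFactors = w.primesLE) (hMJ : M ≤ 2 ^ J)
    (hX : 2 ^ (300 * (k + 1) * 2 ^ J) ≤ X) (hG : ∀ n ∈ G, IsTight k (2 ^ 2 ^ J) X Y n)
    (hGu : ∀ n ∈ G, HasPattern u n) (hGc : ∀ n ∈ G, gapCode M k n = c) :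
    (#G : ℝ) ≤ 7 * (X / M * (2 * M / (M.totient * 2 ^ J)) ^ (k + 1)) := by
  rcases G.eq_empty_or_nonempty with rfl | ⟨n₀, hn₀⟩
  · rw [card_empty, Nat.cast_zero]
    positivity
  set H := (range (k + 1)).image (primeGap n₀)
  have card_H : #H = k + 1 := by
    rw [card_image_of_injective _ (strictMono_primeGap n₀).injective, card_range]
  rw [← card_image_of_injective G strictMono_nth_prime.injective, ← card_H]
  refine card_le_of_forall_not_dvd_add_of_two_pow_le (r := 𝓅 n₀) ?_ (Y := Y) ?_ (by rwa [card_H])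
    (by rwa [card_H]) hwJ hM hMw hMJ (by rwa [card_H]) ?_ ?_ ?_
  · exact nonempty_range_add_one.image _
  · refine forall_mem_image.2 fun i hi ↦ ?_
    exact ((strictMono_primeGap n₀).monotone (mem_range_succ_iff.1 hi)).trans
      (hG n₀ hn₀).primeGap_le
  · exact forall_mem_image.2 fun n hn ↦ (hG n hn).nth_lt
  · exact forall_mem_image.2 fun n hn ↦
      (ZMod.natCast_eq_natCast_iff _ _ _).1 ((hGu n hn 0).trans (hGu n₀ hn₀ 0).symm)
  · refine forall_mem_image.2 fun n hn p p_prime p_le ↦ forall_mem_image.2 fun i hi ↦ ?_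
    rw [← primeGap_eq_of_gapCode_eq (hGu n hn) (hGu n₀ hn₀) ((hGc n hn).trans (hGc n₀ hn₀).symm)
      (mem_range_succ_iff.1 hi), add_primeGap,
      Nat.prime_dvd_prime_iff_eq p_prime (Nat.prime_nth_prime _)]
    exact (p_le.trans_lt ((hG n hn).lt_nth.trans_le
      (strictMono_nth_prime.monotone (Nat.le_add_right n i)))).ne

lemma card_le_card_mul_of_subset_biUnion {ι α : Type*} [DecidableEq α] {s : Finset ι}
    {t : ι → Finset α} {G : Finset α} {B : ℝ} (hG : G ⊆ s.biUnion t)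
    (hB : ∀ i ∈ s, (#(t i) : ℝ) ≤ B) : (#G : ℝ) ≤ #s * B :=
  calc (#G : ℝ) ≤ ∑ i ∈ s, (#(t i) : ℝ) := by
        exact_mod_cast (card_le_card hG).trans card_biUnion_le
    _ ≤ #s * B := by
        rw [← nsmul_eq_mul]
        exact sum_le_card_nsmul s _ B hB

theorem card_le_of_forall_hasPattern (hkw : 2 * (k + 1) ≤ w)
    (hkwY : 2 * (k + 1) ^ 3 * Nat.log w Y ≤ w) (hwJ : w ≤ 2 ^ 2 ^ J) (hM : 0 < M)
    (hMw : M.primeFactors = w.primesLE) (hMJ : M ≤ 2 ^ J) (hX : 2 ^ (300 * (k + 1) * 2 ^ J) ≤ X)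
    (hq : q ∣ M) {a : Fin (k + 1) → (ZMod q)ˣ} {G : Finset ℕ}
    (hG : ∀ n ∈ G, IsTight k (2 ^ 2 ^ J) X Y n) (hGa : ∀ n ∈ G, HasPattern a n) :
    (#G : ℝ) ≤ (M.totient / q.totient) ^ (k + 1) * (Y / M + k).choose k *
      (7 * (X / M * (2 * M / (M.totient * 2 ^ J)) ^ (k + 1))) := by
  classical
  have : NeZero M := ⟨hM.ne'⟩
  have : NeZero q := ⟨(Nat.pos_of_dvd_of_pos hq hM).ne'⟩
  have card_codes : (Y / M + k).choose k = #(powersetCard k (range (Y / M + k))) := by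
    rw [card_powersetCard, card_range]
  rw [← card_filter_unitsMap_comp_eq hq a, card_codes, ← Nat.cast_mul, ← card_product]
  refine card_le_card_mul_of_subset_biUnion
    (t := fun uc ↦ {n ∈ G | HasPattern uc.1 n ∧ gapCode M k n = uc.2}) (fun n hn ↦ ?_)
    fun uc _ ↦ card_le_of_forall_hasPattern_of_forall_gapCode_eq hkw hkwY hwJ hM hMw hMJ hX
      (fun n hn ↦ hG n (mem_filter.1 hn).1) (fun n hn ↦ (mem_filter.1 hn).2.1)
      (fun n hn ↦ (mem_filter.1 hn).2.2)
  obtain ⟨u, hu⟩ : ∃ u : Fin (k + 1) → (ZMod M)ˣ, HasPattern u n := by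
    refine exists_hasPattern (k + 1) hM.ne' fun p hp ↦ ?_
    rw [hMw, Nat.mem_primesLE] at hp
    exact (hp.1.trans hwJ).trans_lt (hG n hn).lt_nth
  refine mem_biUnion.2 ⟨(u, gapCode M k n), mem_product.2 ⟨?_, ?_⟩, ?_⟩
  · exact mem_filter.2 ⟨mem_univ u, hu.unitsMap_comp_eq (hGa n hn) hq⟩
  · exact gapCode_mem_powersetCard M (hG n hn).primeGap_le
  · exact mem_filter.2 ⟨hn, hu, rfl⟩

lemma pow_div_factorial_le {A : ℝ} (hA : 0 < A) (k : ℕ) :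
    A ^ k / k.factorial ≤ (k + 1) / A * (Real.exp 1 * A / (k + 1)) ^ (k + 1) := by
  have exp_eq : Real.exp 1 ^ (k + 1) = Real.exp (k + 1) := by
    rw [← Real.exp_nat_mul, mul_one, Nat.cast_succ]
  calc A ^ k / k.factorial
      = (k + 1) / A * (A / (k + 1)) ^ (k + 1) * ((k + 1) ^ (k + 1) / (k + 1).factorial) := by
        rw [Nat.factorial_succ, Nat.cast_mul, Nat.cast_succ, div_pow, pow_succ A]
        field_simp
    _ ≤ (k + 1) / A * (A / (k + 1)) ^ (k + 1) * Real.exp (k + 1) := by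
        gcongr
        exact_mod_cast Real.pow_div_factorial_le_exp (k + 1 : ℝ) (by positivity) (k + 1)
    _ = (k + 1) / A * (Real.exp 1 * A / (k + 1)) ^ (k + 1) := by
        rw [← exp_eq, mul_assoc, ← mul_pow]
        congr 2
        ring

lemma choose_mul_pow_le {A : ℝ} (hA : 0 < A) {N : ℕ} (hN : (N * M : ℝ) ≤ A) (k : ℕ) :
    (N.choose k * M ^ k : ℝ) ≤ (k + 1) / A * (Real.exp 1 * A / (k + 1)) ^ (k + 1) :=
  calc (N.choose k * M ^ k : ℝ) ≤ N ^ k / k.factorial * M ^ k := by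
        gcongr
        exact Nat.choose_le_pow_div k N
    _ = (N * M : ℝ) ^ k / k.factorial := by ring
    _ ≤ A ^ k / k.factorial := by gcongr
    _ ≤ (k + 1) / A * (Real.exp 1 * A / (k + 1)) ^ (k + 1) := pow_div_factorial_le hA k

lemma choose_div_add_mul_pow_le (hMJ : M ≤ 2 ^ J) (k : ℕ) :
    ((1200 * (k + 1) ^ 2 * 2 ^ J / M + k).choose k * M ^ k : ℝ) ≤
      1 / (1200 * (k + 1) * 2 ^ J) * (3300 * (k + 1) * 2 ^ J) ^ (k + 1) := by
  have mul_le : (1200 * (k + 1) ^ 2 * 2 ^ J / M + k) * M ≤ 1201 * (k + 1) ^ 2 * 2 ^ J :=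
    calc (1200 * (k + 1) ^ 2 * 2 ^ J / M + k) * M
        = 1200 * (k + 1) ^ 2 * 2 ^ J / M * M + k * M := add_mul _ _ _
      _ ≤ 1200 * (k + 1) ^ 2 * 2 ^ J + (k + 1) ^ 2 * 2 ^ J := by
          gcongr ?_ + ?_
          · exact Nat.div_mul_le_self _ _
          · exact Nat.mul_le_mul (by nlinarith) hMJ
      _ = 1201 * (k + 1) ^ 2 * 2 ^ J := by ring
  refine (choose_mul_pow_le (A := 1201 * (k + 1) ^ 2 * 2 ^ J) (by positivity)
    (mod_cast mul_le) k).trans ?_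
  gcongr ?_ * ?_ ^ (k + 1)
  · rw [div_le_div_iff₀ (by positivity) (by positivity)]
    have : (0 : ℝ) ≤ (k + 1) ^ 2 * 2 ^ J := by positivity
    nlinarith
  · rw [div_le_iff₀ (by positivity)]
    have : (0 : ℝ) ≤ (k + 1) ^ 2 * 2 ^ J := by positivity
    nlinarith [Real.exp_one_lt_d9]

lemma eventually_exists_sieve_modulus (m : ℕ) (hq : 0 < q) : ∀ᶠ J : ℕ in atTop, ∃ w M : ℕ,
    2 * m ≤ w ∧ 2 * m ^ 3 * Nat.log w (1200 * m ^ 2 * 2 ^ J) ≤ w ∧ w ≤ 2 ^ 2 ^ J ∧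
      0 < M ∧ M.primeFactors = w.primesLE ∧ M ≤ 2 ^ J ∧ q ∣ M := by
  filter_upwards [eventually_ge_atTop (4 * 2 ^ (16 * m ^ 3)), eventually_ge_atTop (4 * q),
    eventually_ge_atTop (1200 * m ^ 2 + 8)] with J hJm hJq hJm'
  obtain ⟨w, hw⟩ : ∃ w, w = J / 4 := ⟨_, rfl⟩
  have pow_le_w : 2 ^ (16 * m ^ 3) ≤ w := by lia
  have m_le : m ≤ m ^ 3 := Nat.le_self_pow three_ne_zero m
  have log_le : 2 * m ^ 3 * Nat.log w (1200 * m ^ 2 * 2 ^ J) ≤ w := by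
    rcases m.eq_zero_or_pos with rfl | m_pos
    · simp
    have pow_lt : 2 ^ (16 * m ^ 3 * Nat.log w (1200 * m ^ 2 * 2 ^ J)) < 2 ^ (1200 * m ^ 2 + J) :=
      calc 2 ^ (16 * m ^ 3 * Nat.log w (1200 * m ^ 2 * 2 ^ J))
          ≤ w ^ Nat.log w (1200 * m ^ 2 * 2 ^ J) := by
            rw [pow_mul]
            gcongr
        _ ≤ 1200 * m ^ 2 * 2 ^ J := Nat.pow_log_le_self w (by positivity)
        _ < 2 ^ (1200 * m ^ 2 + J) := by
            rw [pow_add]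
            gcongr
            exact Nat.lt_two_pow_self
    have := (Nat.pow_lt_pow_iff_right one_lt_two).1 pow_lt
    lia
  refine ⟨w, q * primorial w, ?_, log_le, ?_, mul_pos hq (primorial_pos w), ?_, ?_,
    dvd_mul_right _ _⟩
  · have := Nat.lt_two_pow_self (n := 16 * m ^ 3)
    lia
  · have := Nat.lt_two_pow_self (n := J)
    have := Nat.lt_two_pow_self (n := 2 ^ J)
    lia
  · rw [Nat.primeFactors_mul hq.ne' (primorial_ne_zero w), primeFactors_primorial]
    refine union_eq_right.2 fun p hp ↦ Nat.mem_primesLE.2 ⟨?_, Nat.prime_of_mem_primeFactors hp⟩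
    exact (Nat.le_of_mem_primeFactors hp).trans (by lia)
  · calc q * primorial w ≤ 2 ^ w * 4 ^ w := by
          gcongr
          · exact (by lia : q ≤ w).trans Nat.lt_two_pow_self.le
          · exact primorial_le_four_pow w
      _ = 2 ^ (3 * w) := by rw [← mul_pow, pow_mul]; norm_num
      _ ≤ 2 ^ J := Nat.pow_le_pow_right two_pos (by lia)

lemma seven_mul_two_div_pow_mul_pow_le {L φ : ℝ} (hL : 0 < L) (hφ : 0 ≤ φ) (k : ℕ) :
    7 * ((2 / (φ * L)) ^ (k + 1) * (3300 * (k + 1) * L) ^ (k + 1)) ≤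
      (50000 * (k + 1) / φ) ^ (k + 1) :=
  calc 7 * ((2 / (φ * L)) ^ (k + 1) * (3300 * (k + 1) * L) ^ (k + 1))
      ≤ 7 ^ (k + 1) * ((2 / (φ * L)) ^ (k + 1) * (3300 * (k + 1) * L) ^ (k + 1)) := by
        gcongr
        exact le_self_pow₀ (by norm_num) k.succ_ne_zero
    _ = (46200 * (k + 1) / φ) ^ (k + 1) := by
        rw [← mul_pow, ← mul_pow]
        congr 1
        field_simp
        norm_num
    _ ≤ (50000 * (k + 1) / φ) ^ (k + 1) := by
        gcongr
        norm_num

theorem eventually_forall_card_le_of_forall_hasPattern (k : ℕ) (hq : 0 < q) :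
    ∀ᶠ J : ℕ in atTop, ∀ (a : Fin (k + 1) → (ZMod q)ˣ) (G : Finset ℕ),
      (∀ n ∈ G, IsTight k (2 ^ 2 ^ J) (2 ^ (300 * (k + 1) * 2 ^ J))
        (1200 * (k + 1) ^ 2 * 2 ^ J) n) → (∀ n ∈ G, HasPattern a n) →
      (#G : ℝ) ≤ 2 ^ (300 * (k + 1) * 2 ^ J) / (1200 * (k + 1) * 2 ^ J) *
        (50000 * (k + 1) / q.totient) ^ (k + 1) := by
  filter_upwards [eventually_exists_sieve_modulus (k + 1) hq] with J hJ a G hG hGa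
  obtain ⟨w, M, hkw, hkwY, hwJ, hM, hMw, hMJ, hqM⟩ := hJ
  have totient_q_pos : (0 : ℝ) < q.totient := by exact_mod_cast Nat.totient_pos.2 hq
  have : (0 : ℝ) < M.totient := by exact_mod_cast Nat.totient_pos.2 hM
  have : (0 : ℝ) < M := by exact_mod_cast hM
  set X : ℝ := 2 ^ (300 * (k + 1) * 2 ^ J)
  set C := (1200 * (k + 1) ^ 2 * 2 ^ J / M + k).choose k
  calc (#G : ℝ) ≤ (M.totient / q.totient) ^ (k + 1) * C *
        (7 * (X / M * (2 * M / (M.totient * 2 ^ J)) ^ (k + 1))) := by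
        simpa only [Nat.cast_pow, Nat.cast_ofNat] using
          card_le_of_forall_hasPattern hkw hkwY hwJ hM hMw hMJ le_rfl hqM hG hGa
    _ = 7 * X * (2 / (q.totient * 2 ^ J)) ^ (k + 1) * (C * M ^ k) := by
        simp only [div_pow, mul_pow, pow_succ (M : ℝ)]
        field_simp
    _ ≤ 7 * X * (2 / (q.totient * 2 ^ J)) ^ (k + 1) *
          (1 / (1200 * (k + 1) * 2 ^ J) * (3300 * (k + 1) * 2 ^ J) ^ (k + 1)) := by
        gcongr ?_ * ?_
        exact choose_div_add_mul_pow_le hMJ k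
    _ = X / (1200 * (k + 1) * 2 ^ J) *
          (7 * ((2 / (q.totient * 2 ^ J)) ^ (k + 1) * (3300 * (k + 1) * 2 ^ J) ^ (k + 1))) := by
        ring
    _ ≤ X / (1200 * (k + 1) * 2 ^ J) * (50000 * (k + 1) / q.totient) ^ (k + 1) := by
        gcongr ?_ * ?_
        exact seven_mul_two_div_pow_mul_pow_le (by positivity) totient_q_pos.le k

lemma sum_range_sub_shift_le {f : ℕ → ℝ} (hf : 0 ≤ f) {N k : ℕ} {X : ℝ}
    (hX : ∀ j < k, f (N + j) ≤ X) : ∑ n ∈ range N, (f (n + k) - f n) ≤ k * X := by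
  have split := (sum_range_add f N k).symm.trans ((congrArg (∑ n ∈ range ·, f n)
    (add_comm N k)).trans (sum_range_add f k N))
  calc ∑ n ∈ range N, (f (n + k) - f n)
      = ∑ j ∈ range k, f (N + j) - ∑ j ∈ range k, f j := by
        simp only [sum_sub_distrib, add_comm _ k]
        linarith
    _ ≤ ∑ j ∈ range k, f (N + j) := sub_le_self _ (sum_nonneg fun j _ ↦ hf j)
    _ ≤ k * X := by
        simpa using sum_le_card_nsmul (range k) _ X fun j hj ↦ hX j (mem_range.1 hj)

lemma card_filter_lt_primeGap_mul_le {N : ℕ} (hX : ∀ j < k, 𝓅 (N + j) ≤ X) :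
    (#{n ∈ range N | Y < primeGap n k} : ℝ) * Y ≤ k * X :=
  calc (#{n ∈ range N | Y < primeGap n k} : ℝ) * Y
      ≤ ∑ n ∈ range N with Y < primeGap n k, (primeGap n k : ℝ) := by
        rw [← nsmul_eq_mul]
        exact card_nsmul_le_sum _ _ _ fun n hn ↦ mod_cast (mem_filter.1 hn).2.le
    _ ≤ ∑ n ∈ range N, (primeGap n k : ℝ) :=
        sum_le_sum_of_subset_of_nonneg (filter_subset _ _) fun _ _ _ ↦ Nat.cast_nonneg _
    _ = ∑ n ∈ range N, ((𝓅 (n + k) : ℝ) - 𝓅 n) :=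
        sum_congr rfl fun n _ ↦ by rw [← add_primeGap, Nat.cast_add, add_sub_cancel_left]
    _ ≤ k * X := sum_range_sub_shift_le (f := fun n ↦ (𝓅 n : ℝ)) (fun _ ↦ Nat.cast_nonneg _)
        fun j hj ↦ mod_cast hX j hj

lemma exists_forall_isTight_and_count_le (k z X : ℕ) (hY : 0 < Y) :
    ∃ G : Finset ℕ, (∀ n ∈ G, IsTight k z X Y n) ∧
      (Nat.count Nat.Prime X : ℝ) ≤ #G + k * X / Y + z + k := by
  classical
  set N := Nat.count Nat.Prime X - k
  refine ⟨{n ∈ range N | z < 𝓅 n ∧ primeGap n k ≤ Y}, fun n hn ↦ ?_, ?_⟩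
  · obtain ⟨n_lt, lt_nth, gap_le⟩ := mem_filter.1 hn
    exact ⟨lt_nth, Nat.nth_lt_of_lt_count (by grind), gap_le⟩
  have cover : range N ⊆ {n ∈ range N | z < 𝓅 n ∧ primeGap n k ≤ Y} ∪
      {n ∈ range N | Y < primeGap n k} ∪ range z := by
    intro n hn
    have := Nat.add_two_le_nth_prime n
    grind
  have N_le : (N : ℝ) ≤ #{n ∈ range N | z < 𝓅 n ∧ primeGap n k ≤ Y} +
      #{n ∈ range N | Y < primeGap n k} + z := by
    have card_le := (card_le_card cover).trans
      ((card_union_le _ _).trans (add_le_add_left (card_union_le _ _) _))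
    rw [card_range, card_range] at card_le
    exact_mod_cast card_le
  have wide_le : (#{n ∈ range N | Y < primeGap n k} : ℝ) ≤ k * X / Y := by
    rcases N.eq_zero_or_pos with N_eq | N_pos
    · rw [N_eq, range_zero, filter_empty, card_empty, Nat.cast_zero]
      positivity
    rw [le_div_iff₀ (mod_cast hY)]
    exact card_filter_lt_primeGap_mul_le fun j hj ↦ (Nat.nth_lt_of_lt_count (by lia)).le
  have count_le : (Nat.count Nat.Prime X : ℝ) ≤ N + k := by exact_mod_cast (by lia)
  linarith

lemma two_pow_div_sub_three_le_count_prime {E : ℕ} (hE : 0 < E) :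
    (2 ^ E / E - 3 : ℝ) ≤ Nat.count Nat.Prime (2 ^ E) := by
  have log_eq : Real.log (2 ^ E : ℕ) = E * Real.log 2 := by
    rw [Nat.cast_pow, Real.log_pow, Nat.cast_ofNat]
  have log_add_one_le : Real.log ((2 ^ E : ℕ) + 1) ≤ 2 * (E * Real.log 2) :=
    calc Real.log ((2 ^ E : ℕ) + 1) ≤ Real.log (2 ^ (2 * E)) := by
          gcongr
          have : 2 ^ E + 1 ≤ 2 ^ (2 * E) := by
            have := Nat.one_lt_two_pow hE.ne'
            rw [two_mul, pow_add]
            nlinarith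
          exact_mod_cast this
      _ = 2 * (E * Real.log 2) := by rw [Real.log_pow]; push_cast; ring
  have pi_le : ((2 ^ E).primeCounting : ℝ) ≤ Nat.count Nat.Prime (2 ^ E) + 1 := by
    rw [Nat.primeCounting, Nat.primeCounting', Nat.count_succ]
    split_ifs <;> simp
  have : 0 < Real.log 2 := Real.log_pos one_lt_two
  have : (0 : ℝ) < E := by exact_mod_cast hE
  calc (2 ^ E / E - 3 : ℝ)
      = ((2 ^ E : ℕ) * Real.log 2 - 2 * (E * Real.log 2)) / (E * Real.log 2) - 1 := by
        push_cast
        field_simp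
        ring
    _ ≤ ((2 ^ E : ℕ) * Real.log 2 - Real.log ((2 ^ E : ℕ) + 1)) / (E * Real.log 2) - 1 := by
        gcongr
    _ ≤ Nat.count Nat.Prime (2 ^ E) := by
        have := Chebyshev.pi_ge (2 ^ E)
        rw [log_eq] at this
        linarith

lemma four_mul_two_pow_two_pow_mul_le (k J : ℕ) :
    4 * 2 ^ 2 ^ J * (300 * (k + 1) * 2 ^ J) ≤ 2 ^ (300 * (k + 1) * 2 ^ J) :=
  calc 4 * 2 ^ 2 ^ J * (300 * (k + 1) * 2 ^ J)
      ≤ 2 ^ 2 * 2 ^ 2 ^ J * (2 ^ 9 * 2 ^ (k + 1) * 2 ^ 2 ^ J) := by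
        gcongr
        · norm_num
        · norm_num
        all_goals exact Nat.lt_two_pow_self.le
    _ = 2 ^ (11 + (k + 1) + 2 * 2 ^ J) := by ring
    _ ≤ 2 ^ (300 * (k + 1) * 2 ^ J) := by
        refine Nat.pow_le_pow_right two_pos ?_
        nlinarith [Nat.one_le_two_pow (n := J)]

theorem eventually_exists_forall_isTight (k B : ℕ) :
    ∀ᶠ J : ℕ in atTop, ∃ G : Finset ℕ,
      (∀ n ∈ G, IsTight k (2 ^ 2 ^ J) (2 ^ (300 * (k + 1) * 2 ^ J))
        (1200 * (k + 1) ^ 2 * 2 ^ J) n) ∧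
      (2 : ℝ) ^ (300 * (k + 1) * 2 ^ J) / (1200 * (k + 1) * 2 ^ J) + B ≤ #G := by
  filter_upwards [eventually_ge_atTop (k + 3 + B)] with J hJ
  obtain ⟨G, hG, count_le⟩ := exists_forall_isTight_and_count_le k (2 ^ 2 ^ J)
    (2 ^ (300 * (k + 1) * 2 ^ J)) (by positivity : 0 < 1200 * (k + 1) ^ 2 * 2 ^ J)
  refine ⟨G, hG, ?_⟩
  have le_count := two_pow_div_sub_three_le_count_prime
    (by positivity : 0 < 300 * (k + 1) * 2 ^ J)
  have two_mul_le : (2 * 2 ^ 2 ^ J : ℝ) ≤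
      2 * (2 ^ (300 * (k + 1) * 2 ^ J) / (1200 * (k + 1) * 2 ^ J)) := by
    rw [mul_div_assoc', le_div_iff₀ (by positivity)]
    have : (4 * 2 ^ 2 ^ J * (300 * (k + 1) * 2 ^ J) : ℝ) ≤ 2 ^ (300 * (k + 1) * 2 ^ J) := by
      exact_mod_cast four_mul_two_pow_two_pow_mul_le k J
    linarith
  have add_le : (k + 3 + B : ℝ) ≤ 2 ^ 2 ^ J := by
    exact_mod_cast hJ.trans (Nat.lt_two_pow_self.le.trans Nat.lt_two_pow_self.le)
  push_cast at count_le le_count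
  set X : ℝ := 2 ^ (300 * (k + 1) * 2 ^ J)
  have main_eq : X / (300 * (k + 1) * 2 ^ J) = 4 * (X / (1200 * (k + 1) * 2 ^ J)) := by
    field_simp
    ring
  have wide_le : k * X / (1200 * (k + 1) ^ 2 * 2 ^ J) ≤ X / (1200 * (k + 1) * 2 ^ J) := by
    rw [div_le_div_iff₀ (by positivity) (by positivity)]
    have : 0 ≤ X * ((k + 1) * 2 ^ J) := by positivity
    nlinarith
  linarith

lemma exists_forall_card_le_add_ncard_infinite_mul {ι α : Type*} [Finite ι]
    (P : ι → α → Prop) [∀ i, DecidablePred (P i)] :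
    ∃ b : ℕ, ∀ (G : Finset α) (B : ℝ), (∀ x ∈ G, ∃ i, P i x) →
      (∀ i, (#{x ∈ G | P i x} : ℝ) ≤ B) →
      (#G : ℝ) ≤ b + {i | {x | P i x}.Infinite}.ncard * B := by
  classical
  have infinite_fin : {i | {x | P i x}.Infinite}.Finite := Set.toFinite _
  have rare_fin : (⋃ i ∈ {i | {x | P i x}.Finite}, {x | P i x}).Finite :=
    (Set.toFinite _).biUnion fun i hi ↦ hi
  refine ⟨#rare_fin.toFinset, fun G B hG hB ↦ ?_⟩
  have card_sdiff_le : (#(G \ rare_fin.toFinset) : ℝ) ≤ #infinite_fin.toFinset * B := by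
    refine card_le_card_mul_of_subset_biUnion (t := fun i ↦ {x ∈ G | P i x}) (fun x hx ↦ ?_)
      fun i _ ↦ hB i
    obtain ⟨x_mem, x_not_rare⟩ := mem_sdiff.1 hx
    obtain ⟨i, hi⟩ := hG x x_mem
    refine mem_biUnion.2 ⟨i, infinite_fin.mem_toFinset.2 fun fin ↦ x_not_rare ?_,
      mem_filter.2 ⟨x_mem, hi⟩⟩
    exact rare_fin.mem_toFinset.2 (Set.mem_biUnion (t := fun i ↦ {x | P i x}) fin hi)
  have card_le : (#G : ℝ) ≤ #rare_fin.toFinset + #(G \ rare_fin.toFinset) := by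
    exact_mod_cast tsub_le_iff_left.1 (le_card_sdiff rare_fin.toFinset G)
  rw [Set.ncard_eq_toFinset_card _ infinite_fin]
  exact card_le.trans (add_le_add_right card_sdiff_le _)

theorem totient_div_pow_le_ncard_infinite_hasPattern (hm : 0 < m) (hq : 0 < q) :
    (q.totient / (50000 * m) : ℝ) ^ m ≤
      {a : Fin m → (ZMod q)ˣ | {n | HasPattern a n}.Infinite}.ncard := by
  classical
  obtain ⟨k, rfl⟩ : ∃ k, m = k + 1 := ⟨m - 1, (Nat.sub_add_cancel hm).symm⟩
  have : NeZero q := ⟨hq.ne'⟩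
  obtain ⟨b, card_le⟩ := exists_forall_card_le_add_ncard_infinite_mul
    (HasPattern (q := q) (m := k + 1))
  obtain ⟨J, pattern_le, ⟨G, hG, le_card_G⟩, q_le⟩ :=
    ((eventually_forall_card_le_of_forall_hasPattern k hq).and
      ((eventually_exists_forall_isTight k b).and (eventually_ge_atTop q))).exists
  have exists_pattern : ∀ n ∈ G, ∃ a : Fin (k + 1) → (ZMod q)ˣ, HasPattern a n :=
    fun n hn ↦ exists_hasPattern (k + 1) hq.ne' fun p hp ↦
      calc p ≤ J := (Nat.le_of_mem_primeFactors hp).trans q_le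
        _ < 2 ^ J := Nat.lt_two_pow_self
        _ < 2 ^ 2 ^ J := Nat.lt_two_pow_self
        _ < 𝓅 n := (hG n hn).lt_nth
  have card_G_le := card_le G _ exists_pattern fun a ↦
    pattern_le a {n ∈ G | HasPattern a n} (fun n hn ↦ hG n (mem_of_mem_filter n hn))
      fun n hn ↦ (mem_filter.1 hn).2
  set N : ℝ := ({a : Fin (k + 1) → (ZMod q)ˣ | {n | HasPattern a n}.Infinite}.ncard : ℝ)
  set D : ℝ := 2 ^ (300 * (k + 1) * 2 ^ J) / (1200 * (k + 1) * 2 ^ J)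
  have D_pos : 0 < D := by positivity
  have : (0 : ℝ) < q.totient := by exact_mod_cast Nat.totient_pos.2 hq
  have one_le : 1 ≤ N * (50000 * (k + 1) / q.totient) ^ (k + 1) := by
    refine le_of_mul_le_mul_left ?_ D_pos
    linarith
  rw [← inv_div, inv_pow, inv_le_iff_one_le_mul₀ (by positivity)]
  exact_mod_cast one_le

lemma tendsto_consecCount_of_infinite {a : Fin m → (ZMod q)ˣ}
    (ha : {n | HasPattern a n}.Infinite) : Tendsto (consecCount q m a) atTop atTop := by
  refine tendsto_atTop.2 fun b ↦ ?_
  obtain ⟨s, hs, card_s⟩ := ha.exists_subset_card_eq b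
  filter_upwards [eventually_ge_atTop (∑ n ∈ s, (𝓅 n : ℝ))] with x hx
  rw [← card_s, ← Set.ncard_coe_finset]
  refine Set.ncard_le_ncard (fun n hn ↦ ⟨le_trans ?_ hx, hs hn⟩) ?_
  · exact single_le_sum (f := fun n ↦ (𝓅 n : ℝ)) (fun _ _ ↦ Nat.cast_nonneg _) hn
  · exact (Set.finite_Iic ⌊x⌋₊).subset fun n hn ↦
      strictMono_nth_prime.le_apply.trans (Nat.le_floor hn.1)

end ConsecutivePrimes

section Asymptotics

lemma eventually_rpow_div_log_le_div_pow {A : ℝ} (hA : 0 < A) :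
    ∀ᶠ m : ℕ in atTop, ∀ φ : ℝ, Real.exp 2 * A * m ≤ φ →
      φ ^ (m / Real.log m) ≤ (φ / (A * m)) ^ m := by
  have tendsto_log : Tendsto (fun m : ℕ ↦ Real.log m) atTop atTop :=
    Real.tendsto_log_atTop.comp tendsto_natCast_atTop_atTop
  filter_upwards [eventually_gt_atTop 0, tendsto_log.eventually_ge_atTop 2,
    tendsto_log.eventually_ge_atTop (2 + Real.log A)] with m m_pos two_le log_A_le φ hφ
  have m_pos' : (0 : ℝ) < m := by exact_mod_cast m_pos
  have φ_pos : 0 < φ := lt_of_lt_of_le (by positivity) hφ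
  have le_log_φ : 2 + Real.log A + Real.log m ≤ Real.log φ := by
    simpa [Real.log_mul, hA.ne', m_pos'.ne'] using Real.log_le_log (by positivity) hφ
  set l := Real.log m
  have l_pos : 0 < l := by linarith
  have rpow_le : φ ^ (1 / l) ≤ φ / (A * m) := by
    rw [← Real.log_le_log_iff (by positivity) (by positivity), Real.log_rpow φ_pos,
      Real.log_div φ_pos.ne' (by positivity), Real.log_mul hA.ne' m_pos'.ne', one_div_mul_eq_div,
      div_le_iff₀ l_pos]
    nlinarith
  calc φ ^ (m / l) = (φ ^ (1 / l)) ^ m := by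
        rw [← Real.rpow_mul_natCast φ_pos.le, one_div_mul_eq_div]
    _ ≤ (φ / (A * m)) ^ m := by gcongr

lemma eventually_mul_le_mul_mul_log (K : ℝ) {c : ℝ} (hc : 0 < c) :
    ∀ᶠ m : ℕ in atTop, K * m ≤ c * m * Real.log m := by
  have tendsto_log : Tendsto (fun m : ℕ ↦ c * Real.log m) atTop atTop :=
    (Real.tendsto_log_atTop.comp tendsto_natCast_atTop_atTop).const_mul_atTop hc
  filter_upwards [tendsto_log.eventually_ge_atTop K] with m hm
  rw [mul_right_comm]
  gcongr

lemma eventually_exp_neg_mul_loglog_div_log_le_one {C : ℝ} (hC : 0 ≤ C) :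
    ∀ᶠ m : ℕ in atTop, Real.exp (-C * m * Real.log (Real.log m) / Real.log m) ≤ 1 := by
  have tendsto_log : Tendsto (fun m : ℕ ↦ Real.log m) atTop atTop :=
    Real.tendsto_log_atTop.comp tendsto_natCast_atTop_atTop
  filter_upwards [tendsto_log.eventually_ge_atTop 1] with m one_le_log
  have loglog_nonneg := Real.log_nonneg one_le_log
  rw [Real.exp_le_one_iff, neg_mul, neg_mul, neg_div, neg_nonpos]
  positivity

end Asymptotics

theorem stmt6_general :
    ∃ K : ℝ, ∀ᶠ m : ℕ in atTop, ∀ q : ℕ, K * m ≤ (q.totient : ℝ) →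
      (q.totient : ℝ) ^ ((m : ℝ) / Real.log m) ≤
        ({a : Fin m → (ZMod q)ˣ | Tendsto (consecCount q m a) atTop atTop}.ncard : ℝ) := by
  refine ⟨Real.exp 2 * 50000, ?_⟩
  filter_upwards [eventually_gt_atTop 0,
    eventually_rpow_div_log_le_div_pow (A := 50000) (by norm_num)] with m m_pos rpow_le q hφ
  have totient_pos : (0 : ℝ) < q.totient := lt_of_lt_of_le (by positivity) hφ
  have q_pos : 0 < q := Nat.totient_pos.1 (by exact_mod_cast totient_pos)
  have : NeZero q := ⟨q_pos.ne'⟩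
  calc (q.totient : ℝ) ^ ((m : ℝ) / Real.log m) ≤ (q.totient / (50000 * m)) ^ m := rpow_le _ hφ
    _ ≤ {a : Fin m → (ZMod q)ˣ | {n | HasPattern a n}.Infinite}.ncard :=
        totient_div_pow_le_ncard_infinite_hasPattern m_pos q_pos
    _ ≤ {a : Fin m → (ZMod q)ˣ | Tendsto (consecCount q m a) atTop atTop}.ncard := by
        gcongr
        · exact Set.toFinite _
        · exact tendsto_consecCount_of_infinite

theorem stmt6 :
    ∃ C : ℝ, 0 < C ∧ ∀ᶠ m : ℕ in atTop, ∀ q : ℕ, 0 < q → Squarefree q →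
      8 * Real.exp 1 ^ 2 * (m : ℝ) * Real.log m < (q.totient : ℝ) →
      Real.exp (-C * (m : ℝ) * Real.log (Real.log m) / Real.log m) *
          (q.totient : ℝ) ^ ((m : ℝ) / Real.log m) ≤
        ({a : Fin m → (ZMod q)ˣ | Tendsto (consecCount q m a) atTop atTop}.ncard : ℝ) := by
  obtain ⟨K, hK⟩ := stmt6_general
  refine ⟨1, one_pos, ?_⟩
  filter_upwards [hK, eventually_mul_le_mul_mul_log K (by positivity : 0 < 8 * Real.exp 1 ^ 2),
    eventually_exp_neg_mul_loglog_div_log_le_one zero_le_one] with m hm K_le exp_le q _ _ hφ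
  exact (mul_le_of_le_one_left (by positivity) exp_le).trans (hm q (K_le.trans hφ.le))
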